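/- For every integer n ≥ 0, the number of perfect matchings of G_n equals A_{n+1}, where A_m = Π_{i=0}^{m−1} (3i+1)!/(m+i)! is the number of n×n alternating sign matrices (and of totally symmetric self-complementary plane partitions of order m). -/

import Mathlib

open Finset

/-- Membership predicate for the vertex set `V_n` of the TSSCPP graph `G_n`:
`0 ≤ x₁ ≤ 2n`, `x₁ ≤ x₂ ≤ 2n+1`, with `(2n,2n+1)` removed when `n` is odd. -/
def memV (n : ℕ) (x : ℤ × ℤ) : Prop :=
  0 ≤ x.1 ∧ x.1 ≤ 2*(n:ℤ) ∧ x.1 ≤ x.2 ∧ x.2 ≤ 2*(n:ℤ)+1 ∧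
    ¬(n % 2 = 1 ∧ x.1 = 2*(n:ℤ) ∧ x.2 = 2*(n:ℤ)+1)

instance memV.decPred (n : ℕ) : DecidablePred (memV n) := fun x => by
  unfold memV; infer_instance

/-- The vertex set `V_n` as a finite set. -/
noncomputable def Vfin (n : ℕ) : Finset (ℤ × ℤ) :=
  (Finset.Icc (0:ℤ) (2*(n:ℤ)) ×ˢ Finset.Icc (0:ℤ) (2*(n:ℤ)+1)).filter (memV n)

/-- The vertex set `V_n` as a set. -/
def Vset (n : ℕ) : Set (ℤ × ℤ) := {x | memV n x}

/-- The distinguished vertex `b_n = (2n, 2n+1-(n mod 2))`. -/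
def bvertex (n : ℕ) : ℤ × ℤ := (2*(n:ℤ), 2*(n:ℤ)+1 - ((n % 2 : ℕ) : ℤ))

/-- Edge relation (with `x` the "lower-left" endpoint) of the TSSCPP graph `G_n`:
horizontal edges `((x₁,x₂),(x₁+1,x₂))` for `0 ≤ x₁ ≤ 2n−1`, `x₁ ≤ x₂ ≤ 2n+1`, `x₁+x₂` odd;
vertical edges `((x₁,x₂),(x₁,x₂+1))` for `0 ≤ x₁ ≤ 2n` (`2n−1` when `n` odd), `x₁ ≤ x₂ ≤ 2n`;
diagonal edges `((x₁,x₁),(x₁+1,x₁+1))` for `0 ≤ x₁ ≤ 2n−1`. -/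
def edgeRel (n : ℕ) (x y : ℤ × ℤ) : Prop :=
  (y.1 = x.1 + 1 ∧ y.2 = x.2 ∧ 0 ≤ x.1 ∧ x.1 ≤ 2*(n:ℤ) - 1 ∧ x.1 ≤ x.2 ∧
      x.2 ≤ 2*(n:ℤ)+1 ∧ Odd (x.1 + x.2)) ∨
  (y.1 = x.1 ∧ y.2 = x.2 + 1 ∧ 0 ≤ x.1 ∧ x.1 ≤ 2*(n:ℤ) - ((n % 2 : ℕ) : ℤ) ∧
      x.1 ≤ x.2 ∧ x.2 ≤ 2*(n:ℤ)) ∨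
  (x.1 = x.2 ∧ y.1 = x.1 + 1 ∧ y.2 = x.2 + 1 ∧ 0 ≤ x.1 ∧ x.1 ≤ 2*(n:ℤ) - 1)

/-- The TSSCPP graph `G_n` (as a graph on all of `ℤ × ℤ`; all of its edges join
vertices of `V_n`). -/
def Gph (n : ℕ) : SimpleGraph (ℤ × ℤ) where
  Adj x y := edgeRel n x y ∨ edgeRel n y x
  symm := ⟨fun x y h => Or.symm h⟩
  loopless := by
    constructor
    rintro ⟨x1, x2⟩ (h | h) <;>
      rcases h with ⟨h1, h2, -⟩ | ⟨h1, h2, -⟩ | ⟨h0, h1, h2, -⟩ <;> omega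

/-- `Zpm n U` = number of perfect matchings of the subgraph of `G_n` induced on `V_n \ U`. -/
noncomputable def Zpm (n : ℕ) (U : Set (ℤ × ℤ)) : ℕ :=
  Nat.card {M : ((Gph n).induce (Vset n \ U)).Subgraph // M.IsPerfectMatching}

/-!
Cut `G_n` into `n + 1` strips parallel to the diagonal `x₁ = x₂`. Read strip by strip, a perfect
matching is the history of `n + 1` particles that start at `0, 2, …, 2n`; at the times
`j = 0, …, n - 1`, those on the sites `0, …, 2j` stay or move one site to the right, without
collisions. In the last strip the matching is forced, the vertices that the particles leave free
being joined in pairs along the diagonal.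

Such histories are counted by the sum of the maximal minors of the coefficient matrix of the
polynomials `X ^ (2 (n - i)) (1 + X) ^ i`: expanding the determinants multilinearly over the first
move, the terms with collisions have two equal rows. The sum of the maximal minors is a Pfaffian, so
its square is the determinant of the Gram matrix of the rows for the form with matrix
`sign (b - a)`. After subtracting from each row twice its predecessor, this Gram matrix is, up to
scaling, a member of a family with parameters `x, y` that is closed under taking contiguous
submatrices, and the Desnanot–Jacobi identity evaluates its determinant by induction on the size.
-/

section Condensation

open Matrix

variable {ι R : Type*} [Fintype ι] [DecidableEq ι] [CommRing R]

theorem det_one_updateCol_updateCol {i j : ι} (hij : i ≠ j) (b c : ι → R) :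
    (((1 : Matrix ι ι R).updateCol i b).updateCol j c).det = b i * c j - c i * b j := by
  let U : Matrix ι (Fin 2) R := .of fun k =>
    ![b k - (Pi.single i 1 : ι → R) k, c k - (Pi.single j 1 : ι → R) k]
  let V : Matrix (Fin 2) ι R := .of ![Pi.single i 1, Pi.single j 1]
  have rank_two_perturbation : ((1 : Matrix ι ι R).updateCol i b).updateCol j c = 1 + U * V := by
    ext k l
    obtain rfl | hlj := eq_or_ne l j
    · simp [U, V, mul_apply, Fin.sum_univ_two, one_apply, Pi.single_apply, hij.symm]
    obtain rfl | hli := eq_or_ne l i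
    · simp [U, V, mul_apply, Fin.sum_univ_two, one_apply, Pi.single_apply, hij]
    · simp [U, V, mul_apply, Fin.sum_univ_two, hlj, hli]
  rw [rank_two_perturbation, det_one_add_mul_comm, det_fin_two]
  simp [U, V, Pi.single_apply, hij, hij.symm]

theorem det_mul_det_updateCol_updateCol_of_isLeftRegular (A : Matrix ι ι R)
    (hA : IsLeftRegular A.det) {i j : ι} (hij : i ≠ j) (u v : ι → R) :
    A.det * ((A.updateCol i u).updateCol j v).det =
      cramer A u i * cramer A v j - cramer A v i * cramer A u j := by
  refine hA ?_
  have h := congrArg det (show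
    A * ((1 : Matrix ι ι R).updateCol i (cramer A u)).updateCol j (cramer A v) =
      (A.updateCol i (A.det • u)).updateCol j (A.det • v) by
    rw [mul_updateCol, mul_updateCol, Matrix.mul_one, mulVec_cramer, mulVec_cramer])
  rw [det_mul, det_one_updateCol_updateCol hij, det_updateCol_smul, updateCol_comm _ hij,
    det_updateCol_smul, updateCol_comm _ hij.symm] at h
  exact h.symm

/-- Cramer's rule for two columns. -/
theorem det_mul_det_updateCol_updateCol (A : Matrix ι ι R) {i j : ι} (hij : i ≠ j)
    (u v : ι → R) :
    A.det * ((A.updateCol i u).updateCol j v).det =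
      cramer A u i * cramer A v j - cramer A v i * cramer A u j := by
  -- The determinant of `A + X • 1` is monic, hence regular; specialise it at `X = 0`.
  let B : Matrix ι ι (Polynomial R) := A.map Polynomial.C + (Polynomial.X : Polynomial R) • 1
  have hB : IsLeftRegular B.det := by
    refine (Polynomial.Monic.isRegular ?_).left
    rw [Polynomial.Monic.def, ← Polynomial.leadingCoeff_det_X_one_add_C A, add_comm]
  have h := congrArg (Polynomial.evalRingHom 0) <|
    det_mul_det_updateCol_updateCol_of_isLeftRegular B hB hij
      (fun k => Polynomial.C (u k)) (fun k => Polynomial.C (v k))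
  have map_B : B.map (Polynomial.eval 0) = A := by
    ext k l
    simp [B, one_apply, apply_ite (Polynomial.eval (0 : R))]
  simp only [cramer_apply, map_mul, map_sub, RingHom.map_det, RingHom.mapMatrix_apply,
    map_updateCol, Polynomial.coe_evalRingHom, map_B, Function.comp_def,
    Polynomial.eval_C] at h
  simpa only [cramer_apply] using h

theorem det_updateCol_zero_last {n : ℕ} (A : Matrix (Fin (n + 2)) (Fin (n + 2)) R) :
    ((A.updateCol 0 (Pi.single 0 1)).updateCol (Fin.last _) (Pi.single (Fin.last _) 1)).det =
      (A.submatrix (fun i : Fin n => i.castSucc.succ) (fun i : Fin n => i.castSucc.succ)).det := by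
  have zero_ne_last : (0 : Fin (n + 2)) ≠ Fin.last _ := Fin.last_pos.ne
  rw [det_succ_column_zero, sum_eq_single 0 (fun i _ hi => by simp [hi, zero_ne_last]) (by simp),
    det_succ_column _ (Fin.last n),
    sum_eq_single (Fin.last n) (fun i _ hi => by simp [← Fin.succ_last, hi]) (by simp)]
  have succ_ne_last (i : Fin n) : i.castSucc.succ ≠ Fin.last _ :=
    (Fin.succ_lt_succ_iff.2 i.castSucc_lt_last).ne
  have inner : (((A.updateCol 0 (Pi.single 0 1)).updateCol (Fin.last _)
      (Pi.single (Fin.last _) 1)).submatrix Fin.succ Fin.succ).submatrix Fin.castSucc Fin.castSucc =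
        A.submatrix (fun i : Fin n => i.castSucc.succ) (fun i => i.castSucc.succ) := by
    ext i j
    simp [succ_ne_last]
  simp [← inner, ← Fin.succ_last, updateCol_ne (Fin.succ_ne_zero (Fin.last n)).symm]

theorem desnanot_jacobi {n : ℕ} (A : Matrix (Fin (n + 2)) (Fin (n + 2)) R) :
    A.det * (A.submatrix (fun i : Fin n => i.castSucc.succ) (fun i => i.castSucc.succ)).det =
      (A.submatrix Fin.castSucc Fin.castSucc).det * (A.submatrix Fin.succ Fin.succ).det -
      (A.submatrix Fin.castSucc Fin.succ).det * (A.submatrix Fin.succ Fin.castSucc).det := by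
  rw [← det_updateCol_zero_last,
    det_mul_det_updateCol_updateCol A (Fin.last_pos.ne : (0 : Fin (n + 2)) ≠ Fin.last _)]
  simp only [cramer_eq_adjugate_mulVec, mulVec_single_one, col_apply,
    adjugate_fin_succ_eq_det_submatrix, Fin.succAbove_zero, Fin.succAbove_last, Fin.val_zero,
    Fin.val_last, pow_add]
  have hsign : (-1 : R) ^ n * (-1) ^ n = 1 := by
    rw [← pow_add, Even.neg_one_pow (Even.add_self n)]
  linear_combination ((A.submatrix Fin.castSucc Fin.castSucc).det *
    (A.submatrix Fin.succ Fin.succ).det - (A.submatrix Fin.castSucc Fin.succ).det *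
      (A.submatrix Fin.succ Fin.castSucc).det) * hsign

end Condensation

section CondensationMatrix

variable {R S : Type*} [CommRing R] [CommRing S]

/-- `n!` times the coefficient of `t ^ n` in `(1 + t) ^ (-x) * (1 - t) ^ (-y)`, given by the
recurrence that the differential equation of this generating function yields. -/
def binomConv (x y : R) : ℕ → R
  | 0 => 1
  | 1 => y - x
  | n + 2 => (y - x) * binomConv x y (n + 1) + (n + 1) * (x + y + n) * binomConv x y n

theorem binomConv_add_two (x y : R) (n : ℕ) : binomConv x y (n + 2) =
    (y - x) * binomConv x y (n + 1) + (n + 1) * (x + y + n) * binomConv x y n := rfl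

theorem binomConv_sub_one_left (x y : R) : ∀ n : ℕ, binomConv (x - 1) y (n + 1) =
    binomConv x y (n + 1) + (n + 1) * binomConv x y n
  | 0 => by simp [binomConv]; ring
  | 1 => by simp [binomConv]; ring
  | n + 2 => by
    rw [binomConv_add_two (x - 1), binomConv_sub_one_left x y (n + 1),
      binomConv_sub_one_left x y n, binomConv_add_two x y (n + 1)]
    push_cast
    linear_combination (-(n : R) - 2) * binomConv_add_two x y n

theorem binomConv_sub_one_right (x y : R) : ∀ n : ℕ, binomConv x (y - 1) (n + 1) =
    binomConv x y (n + 1) - (n + 1) * binomConv x y n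
  | 0 => by simp [binomConv]; ring
  | 1 => by simp [binomConv]; ring
  | n + 2 => by
    rw [binomConv_add_two x (y - 1), binomConv_sub_one_right x y (n + 1),
      binomConv_sub_one_right x y n, binomConv_add_two x y (n + 1)]
    push_cast
    linear_combination ((n : R) + 2) * binomConv_add_two x y n

theorem two_mul_binomConv_add_one_left (x y : R) : ∀ n : ℕ,
    2 * x * binomConv (x + 1) y n = (x + y + n) * binomConv x y n - binomConv x y (n + 1)
  | 0 => by simp [binomConv]; ring
  | n + 1 => by
    have hn := binomConv_sub_one_left (x + 1) y n
    have hn' := binomConv_sub_one_left (x + 1) y (n + 1)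
    rw [add_sub_cancel_right] at hn hn'
    rw [hn, hn', binomConv_add_two]
    push_cast
    ring

theorem two_mul_binomConv_add_one_right (x y : R) : ∀ n : ℕ,
    2 * y * binomConv x (y + 1) n = (x + y + n) * binomConv x y n + binomConv x y (n + 1)
  | 0 => by simp [binomConv]; ring
  | n + 1 => by
    have hn := binomConv_sub_one_right x (y + 1) n
    have hn' := binomConv_sub_one_right x (y + 1) (n + 1)
    rw [add_sub_cancel_right] at hn hn'
    rw [hn, hn', binomConv_add_two]
    push_cast
    ring

-- `1 - t = 2 - (1 + t)`.
theorem binomConv_add_one_sub_one (x y : R) : ∀ n : ℕ,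
    binomConv (x + 1) (y - 1) n = 2 * binomConv (x + 1) y n - binomConv x y n
  | 0 => by simp [binomConv]; ring
  | n + 1 => by
    have h := binomConv_sub_one_left (x + 1) y n
    rw [add_sub_cancel_right] at h
    rw [h, binomConv_sub_one_right]
    ring

-- `1 + t = 2 - (1 - t)`.
theorem binomConv_sub_one_add_one (x y : R) : ∀ n : ℕ,
    binomConv (x - 1) (y + 1) n = 2 * binomConv x (y + 1) n - binomConv x y n
  | 0 => by simp [binomConv]; ring
  | n + 1 => by
    have h := binomConv_sub_one_right x (y + 1) n
    rw [add_sub_cancel_right] at h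
    rw [h, binomConv_sub_one_left]
    ring

theorem mul_binomConv_add_one_sub_two (x y : R) (n : ℕ) :
    x * binomConv (x + 1) (y - 2) (n + 1) = (x + 2 * n + 2) * binomConv x y (n + 1) -
      (n + 1) * (x + 2 * y + 2 * n) * binomConv x y n := by
  have hn := two_mul_binomConv_add_one_left x y n
  have hn' := two_mul_binomConv_add_one_left x y (n + 1)
  rw [binomConv_add_two] at hn'
  rw [show y - 2 = y - 1 - 1 by ring, binomConv_sub_one_right, binomConv_add_one_sub_one,
    binomConv_add_one_sub_one]
  push_cast at hn'
  linear_combination hn' - (n + 1) * hn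

theorem mul_binomConv_sub_two_add_one (x y : R) (n : ℕ) :
    y * binomConv (x - 2) (y + 1) (n + 1) = (y + 2 * n + 2) * binomConv x y (n + 1) +
      (n + 1) * (2 * x + y + 2 * n) * binomConv x y n := by
  have hn := two_mul_binomConv_add_one_right x y n
  have hn' := two_mul_binomConv_add_one_right x y (n + 1)
  rw [binomConv_add_two] at hn'
  rw [show x - 2 = x - 1 - 1 by ring, binomConv_sub_one_left, binomConv_sub_one_add_one,
    binomConv_sub_one_add_one]
  push_cast at hn'
  linear_combination hn' + (n + 1) * hn

theorem binomConv_sub_one_sub_one_add_two (x y : R) (n : ℕ) :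
    binomConv (x - 1) (y - 1) (n + 2) =
      (y - x) * binomConv x y (n + 1) + (n + 1) * (x + y - 2) * binomConv x y n := by
  rw [binomConv_sub_one_right, binomConv_sub_one_left, binomConv_sub_one_left, binomConv_add_two]
  push_cast
  ring

theorem mul_binomConv_sub_one_sub_one (x y : R) : ∀ n : ℕ,
    (x + y + n - 1) * binomConv (x - 1) (y - 1) (n + 1) =
      (x + y - 2) * binomConv x y (n + 1) + (n + 1) * (y - x) * binomConv x y n
  | 0 => by simp [binomConv]; ring
  | n + 1 => by
    rw [binomConv_sub_one_sub_one_add_two, binomConv_add_two]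
    push_cast
    ring

theorem binomConv_condensation (x y : R) (n : ℕ) :
    binomConv x y (n + 2) * binomConv (x + 1) (y + 1) n *
        ((n + 1) * (2 * x + y + 2 * n + 3) * (x + 2 * y + 2 * n + 3)) =
      (x + y + n + 1) * (x + 2 * n + 3) * (y + 2 * n + 3) *
        (binomConv x y (n + 1) * binomConv (x + 1) (y + 1) (n + 1)) -
      (x + y) * (x + 1) * (y + 1) *
        (binomConv (x + 2) (y - 1) (n + 1) * binomConv (x - 1) (y + 2) (n + 1)) := by
  -- Each factor is a combination of `binomConv (x + 1) (y + 1) k` with `k = n, n + 1`.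
  obtain ⟨x, rfl⟩ : ∃ z, x = z - 1 := ⟨x + 1, by ring⟩
  obtain ⟨y, rfl⟩ : ∃ z, y = z - 1 := ⟨y + 1, by ring⟩
  rw [sub_add_cancel, sub_add_cancel, show x - 1 + 2 = x + 1 by ring,
    show y - 1 + 2 = y + 1 by ring, show x - 1 - 1 = x - 2 by ring, show y - 1 - 1 = y - 2 by ring]
  have hx := mul_binomConv_add_one_sub_two x y n
  have hy := mul_binomConv_sub_two_add_one x y n
  have hxy := mul_binomConv_sub_one_sub_one x y n
  rw [binomConv_sub_one_sub_one_add_two]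
  linear_combination (x + y - 2) * (y * binomConv (x - 2) (y + 1) (n + 1)) * hx +
    (x + y - 2) * ((x + 2 * n + 2) * binomConv x y (n + 1) -
      (n + 1) * (x + 2 * y + 2 * n) * binomConv x y n) * hy -
    (x + 2 * n + 2) * (y + 2 * n + 2) * binomConv x y (n + 1) * hxy

theorem map_binomConv (f : R →+* S) (x y : R) : ∀ n : ℕ,
    f (binomConv x y n) = binomConv (f x) (f y) n
  | 0 => by simp [binomConv]
  | 1 => by simp [binomConv]
  | n + 2 => by simp [binomConv, map_binomConv f x y n, map_binomConv f x y (n + 1)]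

/-- The rising factorial `a (a + 1) ⋯ (a + k - 1)`. -/
noncomputable def risingFactorial (a : R) (k : ℕ) : R := (ascPochhammer R k).eval a

theorem risingFactorial_succ (a : R) (k : ℕ) :
    risingFactorial a (k + 1) = risingFactorial a k * (a + k) :=
  ascPochhammer_succ_eval k a

theorem risingFactorial_succ' (a : R) (k : ℕ) :
    risingFactorial a (k + 1) = a * risingFactorial (a + 1) k := by
  simp [risingFactorial, ascPochhammer_succ_left]

theorem risingFactorial_sub_add_one_succ (a b : R) (k : ℕ) :
    risingFactorial (a - (b + 1)) (k + 1) = (a - (b + 1)) * risingFactorial (a - b) k := by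
  rw [risingFactorial_succ', sub_add_eq_sub_sub, sub_add_cancel]

theorem map_risingFactorial (f : R →+* S) (a : R) (k : ℕ) :
    f (risingFactorial a k) = risingFactorial (f a) k := by
  rw [risingFactorial, risingFactorial, ← Polynomial.eval₂_at_apply,
    ascPochhammer_eval₂ f k (f a)]

/-- The entries of a matrix, indexed by all `i j : ℕ`, whose contiguous minors factor (see
`condMinor`). At `x = y = 1` it is the Gram matrix of `diffMatrix` for the form `sgnMatrix`, up to
scaling of rows and columns. -/
noncomputable def condEntry (x y : R) (i j : ℕ) : R :=
  risingFactorial (x + y + i) j * (y - x + 3 * j - 3 * i) *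
    risingFactorial (x + 2 * i - j + 2) j * risingFactorial (y + 2 * j - i + 2) i

/-- The ratio of the linear factors of `condMinor x y i j (k + 1)` and `condMinor x y i j k`. -/
noncomputable def condFactor (x y : R) (i j k : ℕ) : R :=
  k.factorial * risingFactorial (x + y + i + k) j * risingFactorial (x + 2 * (i + k) + 2 - j) j *
    risingFactorial (y + 2 * (j + k) + 2 - i) i *
    risingFactorial (2 * x + y + 3 * i + 2 * k + 1) k *
    risingFactorial (x + 2 * y + 3 * j + 2 * k + 1) k

/-- The value of the contiguous `n × n` minor of `condEntry` with upper left corner `(i, j)`. -/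
noncomputable def condMinor (x y : R) (i j n : ℕ) : R :=
  binomConv (x + 2 * i - j) (y + 2 * j - i) n * ∏ k ∈ range n, condFactor x y i j k

theorem map_condEntry (f : R →+* S) (x y : R) (i j : ℕ) :
    f (condEntry x y i j) = condEntry (f x) (f y) i j := by
  simp [condEntry, map_risingFactorial, map_ofNat f]

theorem map_condMinor (f : R →+* S) (x y : R) (i j n : ℕ) :
    f (condMinor x y i j n) = condMinor (f x) (f y) i j n := by
  simp [condMinor, condFactor, map_binomConv, map_risingFactorial, map_ofNat f]

theorem condFactor_cross (x y : R) (i j k : ℕ) :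
    condFactor x y (i + 1) j k * condFactor x y i (j + 1) k *
      ((x + y + i + j + k + 1) * (x + 2 * i - j + 2 * k + 3) * (y + 2 * j - i + 2 * k + 3)) =
    condFactor x y i j k * condFactor x y (i + 1) (j + 1) k *
      ((x + y + i + j + k) * (x + 2 * i - j + 2 * k + 1) * (y + 2 * j - i + 2 * k + 1)) := by
  unfold condFactor
  push_cast
  rw [risingFactorial_succ (x + y + i + k), risingFactorial_succ (x + y + (i + 1) + k)]
  simp only [risingFactorial_sub_add_one_succ]
  ring

theorem condFactor_diag (x y : R) (i j k : ℕ) :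
    condFactor x y (i + 1) (j + 1) k * ((k + 1) *
      (2 * (x + 2 * i - j) + (y + 2 * j - i) + 2 * k + 3) *
      ((x + 2 * i - j) + 2 * (y + 2 * j - i) + 2 * k + 3)) =
    condFactor x y i j (k + 1) *
      ((x + y + i + j + k + 1) * (x + 2 * i - j + 2 * k + 3) * (y + 2 * j - i + 2 * k + 3)) := by
  unfold condFactor
  push_cast [Nat.factorial_succ]
  rw [risingFactorial_succ, risingFactorial_sub_add_one_succ, risingFactorial_sub_add_one_succ,
    risingFactorial_succ' (2 * x + y + 3 * i + 2 * (k + 1) + 1),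
    risingFactorial_succ' (x + 2 * y + 3 * j + 2 * (k + 1) + 1),
    show x + y + (i + 1 : R) + k = x + y + i + (k + 1) by ring,
    show x + 2 * (i + 1 + k : R) + 2 = x + 2 * (i + (k + 1)) + 2 by ring,
    show y + 2 * (j + 1 + k : R) + 2 = y + 2 * (j + (k + 1)) + 2 by ring,
    show 2 * x + y + 3 * (i + 1 : R) + 2 * k + 1 = 2 * x + y + 3 * i + 2 * (k + 1) + 1 + 1 by ring,
    show x + 2 * y + 3 * (j + 1 : R) + 2 * k + 1 = x + 2 * y + 3 * j + 2 * (k + 1) + 1 + 1 by ring]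
  ring

theorem prod_condFactor_cross (x y : R) (i j n : ℕ) :
    (∏ k ∈ range n, condFactor x y (i + 1) j k) * (∏ k ∈ range n, condFactor x y i (j + 1) k) *
      ((x + y + i + j + n) * (x + 2 * i - j + 2 * n + 1) * (y + 2 * j - i + 2 * n + 1)) =
    (∏ k ∈ range n, condFactor x y i j k) * (∏ k ∈ range n, condFactor x y (i + 1) (j + 1) k) *
      ((x + y + i + j) * (x + 2 * i - j + 1) * (y + 2 * j - i + 1)) := by
  induction n with
  | zero => simp
  | succ n ih =>
    simp only [prod_range_succ]
    push_cast
    linear_combination (condFactor x y i j n * condFactor x y (i + 1) (j + 1) n) * ih +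
      (∏ k ∈ range n, condFactor x y (i + 1) j k) * (∏ k ∈ range n, condFactor x y i (j + 1) k) *
        condFactor_cross x y i j n

theorem condMinor_condensation [IsDomain R] (x y : R) (i j n : ℕ)
    (hD : (x + y + i + j + n + 1) * (x + 2 * i - j + 2 * n + 3) * (y + 2 * j - i + 2 * n + 3) ≠ 0) :
    condMinor x y i j (n + 2) * condMinor x y (i + 1) (j + 1) n =
      condMinor x y i j (n + 1) * condMinor x y (i + 1) (j + 1) (n + 1) -
      condMinor x y i (j + 1) (n + 1) * condMinor x y (i + 1) j (n + 1) := by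
  apply mul_right_cancel₀ hD
  have hcross := prod_condFactor_cross x y i j (n + 1)
  unfold condMinor
  push_cast at hcross ⊢
  rw [prod_range_succ (condFactor x y i j) (n + 1)]
  rw [prod_range_succ (condFactor x y (i + 1) (j + 1)) n] at hcross ⊢
  rw [show x + 2 * (i + 1 : R) - (j + 1) = x + 2 * i - j + 1 by ring,
    show y + 2 * (j + 1 : R) - (i + 1) = y + 2 * j - i + 1 by ring,
    show x + 2 * (i + 1 : R) - j = x + 2 * i - j + 2 by ring,
    show y + 2 * (j + 1 : R) - i = y + 2 * j - i + 2 by ring,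
    show x + 2 * (i : R) - (j + 1) = x + 2 * i - j - 1 by ring,
    show y + 2 * (j : R) - (i + 1) = y + 2 * j - i - 1 by ring]
  linear_combination
    ((∏ k ∈ range (n + 1), condFactor x y i j k) *
      (∏ k ∈ range n, condFactor x y (i + 1) (j + 1) k) * condFactor x y (i + 1) (j + 1) n) *
        binomConv_condensation (x + 2 * i - j) (y + 2 * j - i) n -
    (binomConv (x + 2 * i - j) (y + 2 * j - i) (n + 2) *
      binomConv (x + 2 * i - j + 1) (y + 2 * j - i + 1) n *
      (∏ k ∈ range (n + 1), condFactor x y i j k) *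
      ∏ k ∈ range n, condFactor x y (i + 1) (j + 1) k) * condFactor_diag x y i j n +
    (binomConv (x + 2 * i - j + 2) (y + 2 * j - i - 1) (n + 1) *
      binomConv (x + 2 * i - j - 1) (y + 2 * j - i + 2) (n + 1)) * hcross

theorem binomConv_pos {x y : ℤ} (hsub : x < y) (hadd : 0 < x + y) : ∀ n : ℕ, 0 < binomConv x y n
  | 0 => by simp [binomConv]
  | 1 => by simpa [binomConv] using hsub
  | n + 2 => by
    have h0 := binomConv_pos hsub hadd n
    have h1 := binomConv_pos hsub hadd (n + 1)
    have : 0 < y - x := sub_pos.2 hsub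
    simp only [binomConv]
    positivity

theorem condMinor_pos {x y : ℤ} {i j : ℕ} (n : ℕ) (hx : j < x) (hxy : 3 * i < y - x) :
    0 < condMinor x y i j n := by
  refine mul_pos (binomConv_pos (by lia) (by lia) n) (prod_pos fun k _ => ?_)
  refine mul_pos (mul_pos (mul_pos (mul_pos (mul_pos ?_ ?_) ?_) ?_) ?_) ?_
  · exact_mod_cast k.factorial_pos
  all_goals exact ascPochhammer_pos _ _ (by lia)

section Generic

open MvPolynomial

theorem condMinor_X_ne_zero (i j n : ℕ) :
    condMinor (X 0 : MvPolynomial (Fin 2) ℤ) (X 1) i j n ≠ 0 := by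
  intro h
  have eval_eq_zero := congrArg (eval ![(j : ℤ) + 1, j + 3 * i + 2]) h
  rw [map_condMinor, map_zero, eval_X, eval_X] at eval_eq_zero
  exact (condMinor_pos n (by simp) (by simp; lia)).ne' eval_eq_zero

theorem det_condEntry_X : ∀ n i j : ℕ,
    (Matrix.of fun a b : Fin n =>
      condEntry (X 0 : MvPolynomial (Fin 2) ℤ) (X 1) (i + a) (j + b)).det =
        condMinor (X 0) (X 1) i j n
  | 0, i, j => by simp [condMinor, binomConv]
  | 1, i, j => by
    simp [condMinor, binomConv, condEntry, condFactor, risingFactorial]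
    ring_nf
  | n + 2, i, j => by
    let x : MvPolynomial (Fin 2) ℤ := X 0
    let y : MvPolynomial (Fin 2) ℤ := X 1
    have linear_factors_ne_zero : (x + y + i + j + n + 1) * (x + 2 * i - j + 2 * n + 3) *
        (y + 2 * j - i + 2 * n + 3) ≠ 0 := by
      intro h
      have eval_eq_zero := congrArg (eval ![(j : ℤ), i]) h
      simp only [x, y, map_mul, map_add, map_sub, eval_X, map_natCast, map_ofNat, map_one, map_zero,
        Matrix.cons_val_zero, Matrix.cons_val_one, mul_eq_zero] at eval_eq_zero
      lia
    apply mul_right_cancel₀ (condMinor_X_ne_zero (i + 1) (j + 1) n)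
    rw [condMinor_condensation x y i j n linear_factors_ne_zero, ← det_condEntry_X (n + 1) i j,
      ← det_condEntry_X (n + 1) i (j + 1), ← det_condEntry_X (n + 1) (i + 1) j,
      ← det_condEntry_X (n + 1) (i + 1) (j + 1), ← det_condEntry_X n (i + 1) (j + 1)]
    simp only [add_assoc, add_comm 1]
    exact desnanot_jacobi (.of fun a b : Fin (n + 2) => condEntry (X 0) (X 1) (i + a) (j + b))

theorem det_condEntry (x y : R) (n i j : ℕ) :
    (Matrix.of fun a b : Fin n => condEntry x y (i + a) (j + b)).det = condMinor x y i j n := by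
  have h := congrArg (eval₂Hom (Int.castRingHom R) ![x, y]) (det_condEntry_X n i j)
  simpa [RingHom.map_det, RingHom.mapMatrix_apply, Matrix.map, map_condEntry, map_condMinor] using h

end Generic

end CondensationMatrix

section StrictMono

variable {α : Type*} [LinearOrder α] {N : ℕ}

theorem exists_strictMono_insertNth {u : Fin N → α} (hu : StrictMono u) {b : α}
    (hb : b ∉ Set.range u) : ∃ p : Fin (N + 1), StrictMono (p.insertNth b u) := by
  classical
  have hcard : #(insert b (univ.image u)) = N + 1 := by
    rw [card_insert_of_notMem (by simpa using hb), card_image_of_injective _ hu.injective,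
      card_univ, Fintype.card_fin]
  let t := (insert b (univ.image u)).orderEmbOfFin hcard
  have range_t : Set.range t = insert b (Set.range u) := by simp [t]
  obtain ⟨p, hp⟩ : b ∈ Set.range t := range_t ▸ Set.mem_insert b _
  suffices p.removeNth t = u from ⟨p, by
    rw [← this, ← hp, Fin.insertNth_self_removeNth]; exact t.strictMono⟩
  refine (StrictMono.range_inj (t.strictMono.removeNth p) hu).1 ?_
  change Set.range (t ∘ p.succAbove) = _
  rw [Set.range_comp, Fin.range_succAbove, Set.compl_eq_univ_sdiff, Set.image_sdiff t.injective,
    Set.image_univ, range_t, Set.image_singleton, hp]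
  exact Set.insert_sdiff_self_of_notMem hb

theorem eq_of_strictMono_of_removeNth_eq {t t' : Fin (N + 1) → α} (ht : StrictMono t)
    (ht' : StrictMono t') {p p' : Fin (N + 1)} (hremove : p.removeNth t = p'.removeNth t')
    (hval : t p = t' p') : t = t' := by
  refine (StrictMono.range_inj ht ht').1 ?_
  rw [← Fin.insertNth_self_removeNth p t, ← Fin.insertNth_self_removeNth p' t',
    Fin.range_insertNth, Fin.range_insertNth, hremove, hval]

open scoped Classical in
theorem sum_strictMono_removeNth [Fintype α] {R : Type*} [AddCommMonoid R]
    (H : (Fin N → α) → α → R) (hH : ∀ u b, StrictMono u → b ∈ Set.range u → H u b = 0) :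
    ∑ t : Fin (N + 1) → α with StrictMono t, ∑ p : Fin (N + 1), H (p.removeNth t) (t p) =
      ∑ u : Fin N → α with StrictMono u, ∑ b, H u b := by
  rw [← sum_product', ← sum_product']
  refine sum_of_injOn (fun x => (x.2.removeNth x.1, x.1 x.2)) ?_ ?_ ?_ fun _ _ => rfl
  · rintro ⟨t, p⟩ ht ⟨t', p'⟩ ht' heq
    simp only [coe_product, coe_filter, mem_univ, true_and, coe_univ, Set.mem_prod,
      Set.mem_ofPred_eq, Set.mem_univ, and_true] at ht ht'
    rw [Prod.mk.injEq] at heq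
    obtain rfl := eq_of_strictMono_of_removeNth_eq ht ht' heq.1 heq.2
    exact Prod.ext rfl (ht.injective heq.2)
  · rintro ⟨t, p⟩ ht
    simp only [coe_product, coe_filter, mem_univ, true_and, coe_univ, Set.mem_prod,
      Set.mem_ofPred_eq, Set.mem_univ, and_true] at ht ⊢
    exact ht.removeNth p
  · rintro ⟨u, b⟩ hu hnot
    simp only [mem_product, mem_filter, mem_univ, true_and, and_true] at hu
    refine hH u b hu (by_contra fun hb => hnot ?_)
    obtain ⟨p, hp⟩ := exists_strictMono_insertNth hu hb
    exact ⟨(p.insertNth b u, p), by simpa using hp, by simp⟩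

end StrictMono

section MinorSum

open Matrix

variable {R : Type*} [CommRing R] {M N : ℕ}

open scoped Classical in
/-- The sum of the maximal minors of a matrix, that is of its minors on all rows and any choice of
as many columns. -/
noncomputable def minorSum {m : ℕ} (F : Matrix (Fin m) (Fin M) R) : R :=
  ∑ s : Fin m → Fin M with StrictMono s, (F.submatrix id s).det

theorem minorSum_mul {m : ℕ} (L : Matrix (Fin m) (Fin m) R) (F : Matrix (Fin m) (Fin M) R) :
    minorSum (L * F) = L.det * minorSum F := by
  rw [minorSum, minorSum, mul_sum]
  refine sum_congr rfl fun s _ => ?_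
  rw [← det_mul]
  rfl

open scoped Classical in
theorem sum_mul_minorSum_removeRow (F : Matrix (Fin (N + 1)) (Fin M) R) (ψ : Fin M → R) :
    ∑ j : Fin (N + 1), (-1) ^ (j : ℕ) * (F *ᵥ ψ) j * minorSum (F.submatrix j.succAbove id) =
      ∑ s : Fin (N + 1) → Fin M with StrictMono s,
        (F.submatrix id s).det * ∑ p : Fin (N + 1), (-1) ^ (p : ℕ) * ψ (s p) := by
  let H (u : Fin N → Fin M) (b : Fin M) : R :=
    ψ b * (F.submatrix id (Fin.cons b u : Fin (N + 1) → Fin M)).det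
  have H_eq (u : Fin N → Fin M) (b : Fin M) : H u b =
      ∑ j : Fin (N + 1), (-1) ^ (j : ℕ) * F j b * ψ b * (F.submatrix j.succAbove u).det := by
    simp only [H, det_succ_column_zero, submatrix_apply, submatrix_submatrix, id_eq,
      Fin.cons_zero, Function.id_comp, Fin.cons_comp_succ, mul_sum]
    exact sum_congr rfl fun j _ => by ring
  have H_removeNth (s : Fin (N + 1) → Fin M) (p : Fin (N + 1)) :
      H (p.removeNth s) (s p) = (F.submatrix id s).det * ((-1) ^ (p : ℕ) * ψ (s p)) := by
    rw [H_eq, det_succ_column _ p, sum_mul]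
    refine sum_congr rfl fun j _ => ?_
    have hsign : (-1 : R) ^ (p : ℕ) * (-1) ^ (p : ℕ) = 1 := by rw [← mul_pow]; simp
    simp only [submatrix_submatrix, submatrix_apply, id_eq, Function.id_comp, pow_add]
    change _ * (F.submatrix j.succAbove (s ∘ p.succAbove)).det = _
    linear_combination (-(-1) ^ (j : ℕ) * F j (s p) * ψ (s p) *
      (F.submatrix j.succAbove (s ∘ p.succAbove)).det) * hsign
  have H_eq_zero (u : Fin N → Fin M) (b : Fin M) (hb : b ∈ Set.range u) : H u b = 0 := by
    obtain ⟨i, rfl⟩ := hb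
    exact mul_eq_zero_of_right _ <| det_zero_of_column_eq (Fin.succ_ne_zero i).symm (by simp)
  calc _ = ∑ u : Fin N → Fin M with StrictMono u, ∑ b, H u b := by
        simp only [H_eq, minorSum, mulVec, dotProduct, mul_sum, sum_mul]
        rw [sum_comm]
        refine sum_congr rfl fun u _ => ?_
        rw [sum_comm]
        simp only [submatrix_submatrix, Function.id_comp, Function.comp_id, mul_assoc]
    _ = _ := by
        rw [← sum_strictMono_removeNth H fun u b _ => H_eq_zero u b]
        simp only [H_removeNth, mul_sum]

theorem sum_range_neg_one_pow_mul_sign {n : ℕ} (hn : Odd n) : ∀ {p : ℕ}, p ≤ n →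
    ∑ l ∈ range n, (-1 : R) ^ l * (if l < p then -1 else 1) = (-1) ^ p
  | 0, _ => by simp [neg_one_geom_sum, hn]
  | p + 1, hp => by
    have flip_sign (l : ℕ) : (-1 : R) ^ l * (if l < p + 1 then -1 else 1) =
        (-1) ^ l * (if l < p then -1 else 1) - if p = l then 2 * (-1) ^ l else 0 := by
      rcases lt_trichotomy l p with h | rfl | h
      · simp [h, h.trans p.lt_succ_self, h.ne']
      · simp; ring
      · simp [h.not_gt, h.ne, (Nat.succ_le_iff.2 h).not_gt]
    simp only [flip_sign]
    rw [sum_sub_distrib, sum_ite_eq, if_pos (mem_range.2 hp),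
      sum_range_neg_one_pow_mul_sign hn (Nat.le_of_succ_le hp)]
    ring

/-- The skew-symmetric matrix with entries `1` above and `-1` below the diagonal. -/
def sgnMatrix (R : Type*) [CommRing R] (M : ℕ) : Matrix (Fin M) (Fin M) R :=
  .of fun a b => if a < b then 1 else if b < a then -1 else 0

theorem sum_sgnMatrix_removeNth (hN : Odd N) {t : Fin (N + 1) → Fin M} (ht : StrictMono t)
    (p : Fin (N + 1)) :
    ∑ l : Fin N, (-1) ^ (l : ℕ) * sgnMatrix R M (t p) (p.removeNth t l) = (-1) ^ (p : ℕ) := by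
  rw [← sum_range_neg_one_pow_mul_sign hN p.is_le,
    ← Fin.sum_univ_eq_sum_range (fun l => (-1 : R) ^ l * (if l < p then -1 else 1))]
  refine sum_congr rfl fun l _ => congrArg _ ?_
  simp only [sgnMatrix, of_apply, Fin.removeNth, ht.lt_iff_lt]
  rcases lt_or_ge l.castSucc p with hl | hl
  · rw [Fin.succAbove_of_castSucc_lt _ _ hl, if_neg hl.not_gt, if_pos hl, if_pos (by exact hl)]
  · rw [Fin.succAbove_of_le_castSucc _ _ hl, if_pos (hl.trans_lt Fin.castSucc_lt_succ),
      if_neg (not_lt.2 (by exact hl))]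

theorem sum_sgnMatrix_self (hN : Odd N) {t : Fin N → Fin M} (ht : StrictMono t) (p : Fin N) :
    ∑ l : Fin N, (-1) ^ (l : ℕ) * sgnMatrix R M (t p) (t l) = 0 := by
  have sgn_eq (l : Fin N) : (-1) ^ (l : ℕ) * sgnMatrix R M (t p) (t l) =
      (-1 : R) ^ (l : ℕ) * (if (l : ℕ) < p then -1 else 1) -
        if p = l then (-1) ^ (l : ℕ) else 0 := by
    simp only [sgnMatrix, of_apply, ht.lt_iff_lt, Fin.val_fin_lt]
    rcases lt_trichotomy l p with hl | rfl | hl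
    · simp [hl, hl.not_gt, hl.ne']
    · simp
    · simp [hl, hl.not_gt, hl.ne]
  simp only [sgn_eq]
  rw [sum_sub_distrib, sum_ite_eq, if_pos (mem_univ _),
    Fin.sum_univ_eq_sum_range (fun l => (-1 : R) ^ l * (if l < (p : ℕ) then -1 else 1)),
    sum_range_neg_one_pow_mul_sign hN p.is_lt.le, sub_self]

/-- The Gram matrix of the rows of `F` for the bilinear form `sgnMatrix`. -/
def sgnGram {m : ℕ} (F : Matrix (Fin m) (Fin M) R) : Matrix (Fin m) (Fin m) R :=
  F * sgnMatrix R M * Fᵀ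

theorem sgnGram_submatrix {m k : ℕ} (F : Matrix (Fin m) (Fin M) R) (e : Fin k → Fin m) :
    sgnGram (F.submatrix e id) = (sgnGram F).submatrix e e :=
  rfl

theorem sgnGram_mul {m : ℕ} (L : Matrix (Fin m) (Fin m) R) (F : Matrix (Fin m) (Fin M) R) :
    sgnGram (L * F) = L * sgnGram F * Lᵀ := by
  simp only [sgnGram, transpose_mul, Matrix.mul_assoc]

theorem exists_sgnGram_eq_sub_transpose {m : ℕ} (F : Matrix (Fin m) (Fin M) R) :
    ∃ B : Matrix (Fin m) (Fin m) R, sgnGram F = B - Bᵀ := by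
  let U : Matrix (Fin M) (Fin M) R := .of fun a b => if a < b then 1 else 0
  have sgnMatrix_eq : sgnMatrix R M = U - Uᵀ := by
    ext a b
    rcases lt_trichotomy a b with h | rfl | h
    · simp [sgnMatrix, U, h, h.not_gt]
    · simp [sgnMatrix, U]
    · simp [sgnMatrix, U, h, h.not_gt]
  exact ⟨F * U * Fᵀ, by simp only [sgnGram, sgnMatrix_eq, Matrix.mul_sub, Matrix.sub_mul,
    transpose_mul, transpose_transpose, Matrix.mul_assoc]⟩

theorem sgnGram_self {m : ℕ} (F : Matrix (Fin m) (Fin M) R) (i : Fin m) : sgnGram F i i = 0 := by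
  obtain ⟨B, hB⟩ := exists_sgnGram_eq_sub_transpose F
  simp [hB]

theorem sgnGram_swap {m : ℕ} (F : Matrix (Fin m) (Fin M) R) (i j : Fin m) :
    sgnGram F i j = -sgnGram F j i := by
  obtain ⟨B, hB⟩ := exists_sgnGram_eq_sub_transpose F
  simp [hB]

theorem minorSum_eq_sum_of_even (hN : Even N) (F : Matrix (Fin (N + 1)) (Fin M) R) :
    minorSum F = ∑ j : Fin (N + 1), (-1) ^ (j : ℕ) * (∑ b, F j b) *
      minorSum (F.submatrix j.succAbove id) := by
  classical
  have alternating_sum : ∑ p : Fin (N + 1), (-1 : R) ^ (p : ℕ) = 1 := by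
    rw [Fin.sum_univ_eq_sum_range (fun p => (-1 : R) ^ p), neg_one_geom_sum,
      if_neg (Nat.not_even_iff_odd.2 hN.add_one)]
  simpa [alternating_sum, minorSum, mulVec, dotProduct] using
    (sum_mul_minorSum_removeRow F (fun _ => 1)).symm

/-- The expansion of a Pfaffian along its first row. -/
theorem minorSum_eq_sum_of_odd (hN : Odd (N + 1)) (F : Matrix (Fin (N + 2)) (Fin M) R) :
    minorSum F = ∑ j : Fin (N + 1), (-1) ^ (j : ℕ) * sgnGram F 0 j.succ *
      minorSum (F.submatrix (Fin.succ ∘ j.succAbove) id) := by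
  classical
  let H (u : Fin (N + 1) → Fin M) (b : Fin M) : R := F 0 b * (F.submatrix Fin.succ u).det *
    ∑ l : Fin (N + 1), (-1) ^ (l : ℕ) * sgnMatrix R M b (u l)
  have det_eq (t : Fin (N + 2) → Fin M) (ht : StrictMono t) :
      (F.submatrix id t).det = ∑ p : Fin (N + 2), H (p.removeNth t) (t p) := by
    rw [det_succ_row_zero]
    refine sum_congr rfl fun p _ => ?_
    simp only [H, sum_sgnMatrix_removeNth hN ht p, submatrix_apply, submatrix_submatrix, id_eq,
      Function.id_comp]
    change _ = F 0 (t p) * (F.submatrix Fin.succ (t ∘ p.succAbove)).det * _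
    ring
  calc minorSum F = ∑ t : Fin (N + 2) → Fin M with StrictMono t,
          ∑ p : Fin (N + 2), H (p.removeNth t) (t p) :=
        sum_congr rfl fun t ht => det_eq t (mem_filter.1 ht).2
    _ = ∑ u : Fin (N + 1) → Fin M with StrictMono u, ∑ b, H u b := by
        refine sum_strictMono_removeNth H ?_
        rintro u _ hu ⟨i, rfl⟩
        exact mul_eq_zero_of_right _ (sum_sgnMatrix_self hN hu i)
    _ = ∑ u : Fin (N + 1) → Fin M with StrictMono u, (F.submatrix Fin.succ u).det *
          ∑ l : Fin (N + 1), (-1) ^ (l : ℕ) * (F * sgnMatrix R M) 0 (u l) := by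
        refine sum_congr rfl fun u _ => ?_
        simp only [H, mul_apply, mul_sum]
        rw [sum_comm]
        exact sum_congr rfl fun l _ => sum_congr rfl fun b _ => by ring
    _ = _ := by
        exact (sum_mul_minorSum_removeRow (F.submatrix Fin.succ id) _).symm.trans <|
          sum_congr rfl fun j _ => congrArg₂ _ (congrArg _ (dotProduct_comm _ _)) rfl

theorem det_eq_sq_mul_of_row_zero {k : ℕ} {G : Matrix (Fin (k + 2)) (Fin (k + 2)) R}
    (hG : ∀ i j, G i j = -G j i) {j : Fin (k + 1)} (hj : ∀ i ≠ j.succ, G 0 i = 0) :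
    G.det = G 0 j.succ ^ 2 *
      (G.submatrix (Fin.succ ∘ j.succAbove) (Fin.succ ∘ j.succAbove)).det := by
  have succAbove_zero : j.succ.succAbove 0 = 0 := Fin.succAbove_ne_zero_zero (Fin.succ_ne_zero j)
  have succAbove_comp_succ : j.succ.succAbove ∘ Fin.succ = Fin.succ ∘ j.succAbove :=
    funext fun i => Fin.succ_succAbove_succ j i
  rw [det_succ_row_zero, sum_eq_single j.succ (fun i _ hi => by rw [hj i hi]; ring) (by simp),
    det_succ_column_zero, sum_eq_single j ?_ (by simp)]
  · rw [submatrix_submatrix, submatrix_apply, succAbove_comp_succ, succAbove_zero, hG j.succ,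
      Fin.val_succ, pow_succ]
    have hsign : (-1 : R) ^ (j : ℕ) * (-1) ^ (j : ℕ) = 1 := by rw [← mul_pow]; simp
    linear_combination (G 0 j.succ ^ 2 *
      (G.submatrix (Fin.succ ∘ j.succAbove) (Fin.succ ∘ j.succAbove)).det) * hsign
  · intro i _ hi
    rw [submatrix_apply, succAbove_zero, hG, hj _ fun h => hi (Fin.succ_injective _ h)]
    ring

theorem minorSum_sq_of_row_zero (hN : Even N) {F : Matrix (Fin (N + 2)) (Fin M) R}
    {j : Fin (N + 1)} (hj : ∀ i ≠ j.succ, sgnGram F 0 i = 0)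
    (ih : ∀ F : Matrix (Fin N) (Fin M) R, minorSum F ^ 2 = (sgnGram F).det) :
    minorSum F ^ 2 = (sgnGram F).det := by
  rw [det_eq_sq_mul_of_row_zero (sgnGram_swap F) hj, minorSum_eq_sum_of_odd hN.add_one,
    sum_eq_single j (fun i _ hi => by
      rw [hj _ fun h => hi (Fin.succ_injective _ h)]; ring) (by simp), mul_pow, mul_pow, ← pow_mul,
    mul_comm (j : ℕ), pow_mul, neg_one_sq, one_pow, one_mul, ih,
    sgnGram_submatrix]

variable {K : Type*} [Field K]

theorem exists_det_eq_one_row_eq_zero {ι : Type*} [Fintype ι] [DecidableEq ι] (G : Matrix ι ι K)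
    {p q : ι} (hpp : G p p = 0) (hpq : G p q ≠ 0) :
    ∃ L : Matrix ι ι K, L.det = 1 ∧ ∀ i ≠ q, (L * G * Lᵀ) p i = 0 := by
  have p_ne_q : p ≠ q := by rintro rfl; exact hpq hpp
  let b : ι → K := Function.update (fun i => -G p i / G p q) q 1
  let L : Matrix ι ι K := (1 : Matrix ι ι K).updateCol q b
  have row_p : (L * G) p = G p := by
    have L_p : L p = (1 : Matrix ι ι K) p := by
      ext k
      obtain rfl | hk := eq_or_ne k q
      · simp [L, b, p_ne_q, hpp]
      · simp [L, hk]
    rw [← Matrix.one_mul G]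
    ext k
    simp only [mul_apply, L_p, Matrix.one_mul]
  refine ⟨L, by rw [← cramer_apply, cramer_one]; simp [b], fun i hi => ?_⟩
  calc
    (L * G * Lᵀ) p i = ∑ k, G p k * L i k := by
      rw [Matrix.mul_apply, row_p]
      rfl
    _ = G p q * b i + ∑ k ∈ univ.erase q, G p k * (1 : Matrix ι ι K) i k := by
      rw [← add_sum_erase _ _ (mem_univ q)]
      refine congrArg₂ _ (by simp [L]) (sum_congr rfl fun k hk => ?_)
      simp [L, (mem_erase.1 hk).1]
    _ = G p q * b i + G p i := by simp [one_apply, hi]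
    _ = 0 := by simp [b, hi]; field_simp; ring

/-- The sum of the maximal minors of a matrix with an even number of rows is the Pfaffian of
`sgnGram`, up to sign. -/
theorem minorSum_sq : ∀ {m : ℕ}, Even m → ∀ F : Matrix (Fin m) (Fin M) K,
    minorSum F ^ 2 = (sgnGram F).det
  | 0, _, F => by simp [minorSum, Subsingleton.strictMono]
  | 1, h, _ => absurd h (by decide)
  | N + 2, hN, F => by
    have hN : Even N := by simpa [parity_simps] using hN
    by_cases! hrow : ∀ j : Fin (N + 1), sgnGram F 0 j.succ = 0
    · have first_row (i : Fin (N + 2)) : sgnGram F 0 i = 0 :=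
        Fin.cases (sgnGram_self F 0) hrow i
      rw [minorSum_eq_sum_of_odd hN.add_one, det_eq_zero_of_row_eq_zero 0 first_row]
      simp [hrow]
    · obtain ⟨j, hj⟩ := hrow
      obtain ⟨L, det_L, hL⟩ := exists_det_eq_one_row_eq_zero (sgnGram F) (sgnGram_self F 0) hj
      have h := minorSum_sq_of_row_zero hN (by rwa [sgnGram_mul]) (minorSum_sq hN) (F := L * F)
      simpa [minorSum_mul, sgnGram_mul, det_L] using h

end MinorSum

section MinorSumRows

open Matrix

variable {R : Type*} [CommRing R] {m M : ℕ}

theorem minorSum_add (v w : Matrix (Fin m) (Fin M) R) :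
    minorSum (v + w) = ∑ s : Finset (Fin m), minorSum (of (s.piecewise v w)) := by
  simp only [minorSum]
  rw [sum_comm]
  refine sum_congr rfl fun c _ => ((detRowAlternating (R := R)
    (n := Fin m)).toMultilinearMap.map_add_univ (v.submatrix id c) (w.submatrix id c)).trans ?_
  refine sum_congr rfl fun s _ => congrArg det ?_
  ext i k
  by_cases h : i ∈ s <;> simp [Finset.piecewise, h]

theorem minorSum_eq_zero_of_row_zero {F : Matrix (Fin m) (Fin M) R} (i : Fin m)
    (h : ∀ a, F i a = 0) : minorSum F = 0 :=
  sum_eq_zero fun s _ => det_eq_zero_of_row_eq_zero i fun k => h (s k)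

theorem minorSum_eq_zero_of_row_eq {F : Matrix (Fin m) (Fin M) R} {i j : Fin m} (hij : i ≠ j)
    (h : F i = F j) : minorSum F = 0 :=
  sum_eq_zero fun s _ => det_zero_of_row_eq hij (funext fun k => congrFun h (s k))

theorem minorSum_one_submatrix {t : Fin m → Fin M} (ht : StrictMono t) :
    minorSum ((1 : Matrix (Fin M) (Fin M) R).submatrix t id) = 1 := by
  rw [minorSum, sum_eq_single t]
  · rw [submatrix_submatrix, Function.comp_id, Function.id_comp, submatrix_one _ ht.injective,
      det_one]
  · intro s hs hne
    replace hs := (mem_filter.1 hs).2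
    obtain ⟨i, hi⟩ : ∃ i, t i ∉ Set.range s := by
      by_contra! h
      refine hne (StrictMono.range_inj hs ht |>.1 (Set.eq_of_subset_of_ncard_le
        (Set.range_subset_iff.2 h) ?_).symm)
      rw [← Set.image_univ, ← Set.image_univ, Set.ncard_image_of_injective _ hs.injective,
        Set.ncard_image_of_injective _ ht.injective]
    exact det_eq_zero_of_row_eq_zero i fun k => one_apply_ne fun h => hi ⟨k, h.symm⟩
  · simp [ht]

theorem minorSum_submatrix_perm (σ : Equiv.Perm (Fin m)) (F : Matrix (Fin m) (Fin M) R) :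
    minorSum (F.submatrix σ id) = σ.sign * minorSum F := by
  rw [← det_permutation, ← minorSum_mul, ← PEquiv.toMatrix_toPEquiv_mul]

end MinorSumRows

section Factorial

open Polynomial Nat

variable {R : Type*} [CommRing R]

theorem cast_descFactorial_succ (n k : ℕ) :
    (n.descFactorial (k + 1) : R) = n.descFactorial k * (n - k) := by
  simp only [← descPochhammer_eval_eq_descFactorial, descPochhammer_succ_eval]

theorem risingFactorial_natCast_sub_add_one (n k : ℕ) :
    risingFactorial ((n : R) - k + 1) k = n.descFactorial k := by
  rw [risingFactorial, ← descPochhammer_eval_eq_ascPochhammer,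
    descPochhammer_eval_eq_descFactorial]

theorem factorial_mul_risingFactorial (n k : ℕ) :
    (n ! : R) * risingFactorial ((n : R) + 1) k = (n + k)! := by
  rw [← factorial_mul_ascFactorial, Nat.cast_mul, ← ascPochhammer_nat_eq_natCast_ascFactorial,
    Nat.cast_succ, risingFactorial]

theorem coeff_X_pow_mul_one_add_X_pow_mul_factorial {s a b k l : ℕ} (h : k + l = s + a + b) :
    (X ^ a * (1 + X) ^ s : R[X]).coeff k * (k ! * l !) =
      s ! * (k.descFactorial a * l.descFactorial b) := by
  rw [coeff_X_pow_mul', coeff_one_add_X_pow]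
  split_ifs with hak
  · obtain hbl | hlb := le_or_gt b l
    · have hs : s = k - a + (l - b) := by omega
      rw [← factorial_mul_descFactorial hak, ← factorial_mul_descFactorial hbl]
      simp only [← Nat.cast_mul]
      rw [hs, ← add_choose_mul_factorial_mul_factorial, choose_symm_add]
      ring_nf
    · rw [choose_eq_zero_of_lt (by omega), descFactorial_of_lt hlb]
      simp
  · rw [descFactorial_of_lt (not_le.1 hak)]
    simp

/-- The number of `m × m` alternating sign matrices. -/
noncomputable def asmProd (m : ℕ) : ℚ := ∏ i ∈ range m, ((3 * i + 1)! : ℚ) / (m + i)!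

theorem asmProd_succ (m : ℕ) :
    asmProd (m + 1) = asmProd m * ((3 * m + 1)! * m ! / ((2 * m)! * (2 * m + 1)!)) := by
  have shift : (∏ i ∈ range m, ((m + 1 + i)! : ℚ)) * m ! =
      (∏ i ∈ range m, ((m + i)! : ℚ)) * (2 * m)! := by
    rw [two_mul, ← prod_range_succ fun i => ((m + i)! : ℚ), prod_range_succ']
    simp only [add_assoc, add_comm 1, add_zero]
  have prod_ne_zero (k : ℕ) : ∏ i ∈ range m, ((k + i)! : ℚ) ≠ 0 :=
    prod_ne_zero_iff.2 fun i _ => by positivity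
  have hm := prod_ne_zero m
  have hm' := prod_ne_zero (m + 1)
  rw [asmProd, asmProd, prod_range_succ, prod_div_distrib, prod_div_distrib,
    show m + 1 + m = 2 * m + 1 by ring]
  field_simp
  linear_combination -(shift)

end Factorial

section GramMatrix

open Matrix Polynomial Nat

variable {R : Type*} [CommRing R]

theorem sum_range_coeff_one_sub_X_mul (d : R[X]) (k : ℕ) :
    ∑ b ∈ range k, ((1 - X) * d).coeff b = (X * d).coeff k := by
  induction k with
  | zero => simp
  | succ k ih => rw [sum_range_succ, ih, sub_mul, one_mul, coeff_sub, coeff_X_mul]; ring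

-- Summation by parts: against `1 - X`, the form `sgnMatrix` acts as `-(1 + X)`.
theorem sum_sgnMatrix_mul_coeff {M : ℕ} (d : R[X]) (hd : d.coeff M = 0) (a : Fin (M + 1)) :
    ∑ b : Fin (M + 1), sgnMatrix R (M + 1) a b * ((1 - X) * d).coeff b =
      -((1 + X) * d).coeff a := by
  have sum_lt (k : ℕ) (hk : k ≤ M + 1) :
      ∑ b : Fin (M + 1), (if (b : ℕ) < k then ((1 - X) * d).coeff b else 0) =
        (X * d).coeff k := by
    rw [Fin.sum_univ_eq_sum_range fun b => if b < k then ((1 - X) * d : R[X]).coeff b else 0,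
      ← sum_filter, ← sum_range_coeff_one_sub_X_mul]
    congr 1
    ext b
    simp only [mem_filter, mem_range]
    omega
  have sgn_eq (b : Fin (M + 1)) : sgnMatrix R (M + 1) a b * ((1 - X) * d).coeff b =
      (if (b : ℕ) < M + 1 then ((1 - X) * d).coeff b else 0) -
        (if (b : ℕ) < a then ((1 - X) * d).coeff b else 0) -
        (if (b : ℕ) < a + 1 then ((1 - X) * d).coeff b else 0) := by
    simp only [sgnMatrix, of_apply, Fin.lt_def]
    grind
  simp only [sgn_eq, sum_sub_distrib, sum_lt _ le_rfl, sum_lt _ a.is_lt.le, sum_lt _ a.is_lt,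
    coeff_X_mul, hd, add_mul, one_mul, coeff_add]
  ring

theorem sum_coeff_mul_coeff (n : ℕ) (p q : R[X]) :
    ∑ a : Fin (n + 1), p.coeff a * q.coeff a = (p * reflect n q).coeff n := by
  rw [coeff_mul, Finset.Nat.sum_antidiagonal_eq_sum_range_succ_mk,
    Fin.sum_univ_eq_sum_range (fun a => p.coeff a * q.coeff a)]
  refine sum_congr rfl fun a ha => ?_
  rw [coeff_reflect, revAt_le (Nat.sub_le n a), Nat.sub_sub_self (mem_range_succ_iff.1 ha)]

theorem natDegree_one_add_X_pow_le (i : ℕ) : ((1 + X : R[X]) ^ i).natDegree ≤ i := by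
  simpa using natDegree_pow_le_of_le i (by compute_degree : (1 + X : R[X]).natDegree ≤ 1)

theorem reflect_one_add_X_pow (i : ℕ) : reflect i ((1 + X : R[X]) ^ i) = (1 + X) ^ i := by
  induction i with
  | zero => simp
  | succ i ih =>
    have reflect_one_add_X : reflect 1 (1 + X : R[X]) = 1 + X := by simp [add_comm]
    rw [pow_succ, reflect_mul _ _ (natDegree_one_add_X_pow_le i) (by compute_degree), ih,
      reflect_one_add_X]

/-- The polynomial `X ^ (2 (n - i)) (1 + X) ^ i`, whose coefficients count the ways in which the
particle that starts at `2 (n - i)`, and may move at `i` times, can reach a given site. -/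
noncomputable def stepPoly (n i : ℕ) : ℚ[X] := X ^ (2 * (n - i)) * (1 + X) ^ i

/-- The polynomial `d` for which `(1 - X) d` is the difference of `stepPoly n (i + 1)` and
`2 * stepPoly n i`. -/
noncomputable def diffPoly (n i : ℕ) : ℚ[X] := (1 + 2 * X) * (X ^ (2 * (n - (i + 1))) * (1 + X) ^ i)

theorem stepPoly_succ {n i : ℕ} (hi : i < n) :
    stepPoly n (i + 1) = 2 * stepPoly n i + (1 - X) * diffPoly n i := by
  rw [stepPoly, stepPoly, diffPoly, show n - i = n - (i + 1) + 1 by omega]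
  ring

theorem natDegree_diffPoly_le (n i : ℕ) :
    (diffPoly n i).natDegree ≤ 1 + (2 * (n - (i + 1)) + i) := by
  refine natDegree_mul_le_of_le (by compute_degree) (natDegree_mul_le_of_le ?_ ?_)
  · exact natDegree_X_pow_le _
  · exact natDegree_one_add_X_pow_le i

theorem reflect_one_add_X_mul_diffPoly {n j : ℕ} (hj : j < n) :
    reflect (2 * n) ((1 + X) * diffPoly n j) = X ^ j * ((2 + X) * (1 + X) ^ (j + 1)) := by
  have reflect_X_pow :
      reflect (2 * (n - (j + 1)) + j) (X ^ (2 * (n - (j + 1))) : ℚ[X]) = X ^ j := by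
    rw [reflect_monomial, revAt_le (Nat.le_add_right _ _), Nat.add_sub_cancel_left]
  have reflect_linear : reflect 1 (1 + 2 * X : ℚ[X]) = 2 + X := by
    rw [reflect_add, ← map_ofNat C 2, reflect_C_mul, reflect_one_X, ← C_1, reflect_C]
    simp [add_comm]
  rw [diffPoly, show (1 + X) * ((1 + 2 * X) * (X ^ (2 * (n - (j + 1))) * (1 + X) ^ j)) =
      X ^ (2 * (n - (j + 1))) * ((1 + 2 * X) * (1 + X) ^ (j + 1) : ℚ[X]) by ring,
    show 2 * n = 2 * (n - (j + 1)) + j + (1 + (j + 1)) by omega,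
    reflect_mul _ _ ((natDegree_X_pow_le _).trans (Nat.le_add_right _ _))
      (natDegree_mul_le_of_le (by compute_degree) (natDegree_one_add_X_pow_le _)),
    reflect_mul _ _ (by compute_degree) (natDegree_one_add_X_pow_le _), reflect_X_pow,
    reflect_linear, reflect_one_add_X_pow]

/-- The coefficient vectors of `(1 - X) * diffPoly n 0, …, (1 - X) * diffPoly n (n - 1)`. -/
noncomputable def diffMatrix (n : ℕ) : Matrix (Fin n) (Fin (2 * n + 1)) ℚ :=
  of fun i a => ((1 - X) * diffPoly n i).coeff a

theorem coeff_diffPoly_two_mul {n i : ℕ} (hi : i < n) : (diffPoly n i).coeff (2 * n) = 0 :=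
  coeff_eq_zero_of_natDegree_lt <| (natDegree_diffPoly_le n i).trans_lt (by omega)

theorem sum_diffMatrix {n : ℕ} (i : Fin n) : ∑ a, diffMatrix n i a = 0 := by
  simp only [diffMatrix, of_apply]
  rw [Fin.sum_univ_eq_sum_range (fun a => ((1 - X) * diffPoly n i : ℚ[X]).coeff a),
    sum_range_coeff_one_sub_X_mul, coeff_X_mul, coeff_diffPoly_two_mul i.is_lt]

theorem sgnMatrix_mul_transpose_diffMatrix {n : ℕ} (a : Fin (2 * n + 1)) (j : Fin n) :
    (sgnMatrix ℚ (2 * n + 1) * (diffMatrix n)ᵀ) a j = -((1 + X) * diffPoly n j).coeff a :=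
  sum_sgnMatrix_mul_coeff _ (coeff_diffPoly_two_mul j.is_lt) a

theorem sgnGram_diffMatrix_eq_coeff {n : ℕ} (i j : Fin n) :
    sgnGram (diffMatrix n) i j = -(X ^ (j : ℕ) * ((2 + 3 * X - 3 * X ^ 2 - 2 * X ^ 3) *
      (1 + X) ^ (i + j + 1 : ℕ)) : ℚ[X]).coeff (2 * i + 2) := by
  have hi : 2 * n = 2 * i + 2 + 2 * (n - (i + 1)) := by omega
  rw [sgnGram, Matrix.mul_assoc, Matrix.mul_apply]
  simp only [sgnMatrix_mul_transpose_diffMatrix, mul_neg, sum_neg_distrib]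
  simp only [diffMatrix, of_apply]
  rw [sum_coeff_mul_coeff (2 * n), reflect_one_add_X_mul_diffPoly j.is_lt,
    ← coeff_X_pow_mul _ (2 * (n - (i + 1))) (2 * i + 2), ← hi, diffPoly]
  ring_nf

/-- The scaling of row and column `k` that turns `condEntry 1 1` into the Gram matrix of
`diffMatrix`, apart from the sign and an additional factor `(k + 1)!` for the rows. -/
noncomputable def condWeight (k : ℕ) : ℚ := (3 * k + 4) / (2 * k + 2)!

theorem condEntry_one_one (i j : ℕ) : condEntry (1 : ℚ) 1 i j * (i + 1)! =
    (i + j + 1)! * (3 * j - 3 * i) *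
      ((2 * i + 2).descFactorial j * (2 * j + 2).descFactorial i) := by
  rw [condEntry, ← risingFactorial_natCast_sub_add_one, ← risingFactorial_natCast_sub_add_one,
    show i + j + 1 = i + 1 + j by ring, ← factorial_mul_risingFactorial (i + 1) j]
  simp only [Nat.cast_add, Nat.cast_mul, Nat.cast_ofNat, Nat.cast_one]
  ring_nf

theorem sgnGram_diffMatrix {n : ℕ} (i j : Fin n) : sgnGram (diffMatrix n) i j =
    -((i + 1)! * condWeight i * (condWeight j * condEntry 1 1 i j)) := by
  rw [sgnGram_diffMatrix_eq_coeff, neg_inj]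
  generalize (i : ℕ) = i, (j : ℕ) = j
  have coeff_eq (a b : ℕ) (hab : a + b = 3) :
      (X ^ (j + a) * (1 + X) ^ (i + j + 1) : ℚ[X]).coeff (2 * i + 2) =
        (i + j + 1)! * ((2 * i + 2).descFactorial (j + a) * (2 * j + 2).descFactorial (i + b)) /
          ((2 * i + 2)! * (2 * j + 2)!) := by
    rw [eq_div_iff (by positivity)]
    exact coeff_X_pow_mul_one_add_X_pow_mul_factorial (by omega)
  have expand : (X ^ j * ((2 + 3 * X - 3 * X ^ 2 - 2 * X ^ 3) * (1 + X) ^ (i + j + 1)) : ℚ[X]) =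
      C 2 * (X ^ (j + 0) * (1 + X) ^ (i + j + 1)) + C 3 * (X ^ (j + 1) * (1 + X) ^ (i + j + 1)) -
        C 3 * (X ^ (j + 2) * (1 + X) ^ (i + j + 1)) -
        C 2 * (X ^ (j + 3) * (1 + X) ^ (i + j + 1)) := by
    simp only [map_ofNat]
    ring
  simp only [expand, coeff_sub, coeff_add, coeff_C_mul]
  rw [coeff_eq 0 3 rfl, coeff_eq 1 2 rfl, coeff_eq 2 1 rfl, coeff_eq 3 0 rfl, condWeight,
    condWeight]
  simp only [add_zero, cast_descFactorial_succ]
  have h := condEntry_one_one i j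
  push_cast
  field_simp
  linear_combination -(3 * i + 4) * (3 * j + 4 : ℚ) * h

theorem asmProd_succ_sq (m : ℕ) : asmProd (m + 1) ^ 2 =
    m ! * ∏ k ∈ range m, ((k + 1)! * condWeight k ^ 2 * condFactor 1 1 0 0 k) := by
  induction m with
  | zero => simp [asmProd]
  | succ m ih =>
    have condFactor_eq :
        condFactor (1 : ℚ) 1 0 0 m = m ! * (3 * m + 3)! ^ 2 / (2 * m + 3)! ^ 2 := by
      rw [eq_div_iff (by positivity), show 3 * m + 3 = 2 * m + 3 + m by ring,
        ← factorial_mul_risingFactorial (2 * m + 3) m, condFactor]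
      simp only [Nat.cast_add, Nat.cast_mul, Nat.cast_ofNat, Nat.cast_zero, risingFactorial,
        ascPochhammer_zero, eval_one]
      ring_nf
    rw [asmProd_succ, mul_pow, ih, prod_range_succ, condWeight, condFactor_eq,
      show 2 * (m + 1) = 2 * m + 2 by ring, show 3 * (m + 1) + 1 = 3 * m + 3 + 1 by ring,
      factorial_succ (3 * m + 3), factorial_succ m]
    push_cast
    field_simp
    ring

theorem asmProd_add_two_sq (m : ℕ) : asmProd (m + 2) ^ 2 = 2 * m ! * (m + 2) *
    ∏ k ∈ range m, ((k + 2)! * condWeight (k + 1) ^ 2 * condFactor 1 1 1 1 k) := by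
  induction m with
  | zero => simp [asmProd, prod_range_succ, factorial]; norm_num
  | succ m ih =>
    have condFactor_eq : condFactor (1 : ℚ) 1 1 1 m =
        m ! * (m + 3) * (2 * m + 4) ^ 2 * (3 * m + 6)! ^ 2 / (2 * m + 6)! ^ 2 := by
      rw [eq_div_iff (by positivity), show 3 * m + 6 = 2 * m + 6 + m by ring,
        ← factorial_mul_risingFactorial (2 * m + 6) m, condFactor]
      simp only [Nat.cast_add, Nat.cast_mul, Nat.cast_ofNat, Nat.cast_one, risingFactorial,
        ascPochhammer_one, eval_X]
      ring_nf
    rw [asmProd_succ, mul_pow, ih, prod_range_succ, condWeight, condFactor_eq,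
      show 3 * (m + 2) + 1 = 3 * m + 6 + 1 by ring, show 2 * (m + 2) = 2 * m + 4 by ring,
      show 2 * (m + 1) + 2 = 2 * m + 4 by ring, factorial_succ (3 * m + 6),
      factorial_succ (2 * m + 5), factorial_succ (2 * m + 4), factorial_succ (m + 1),
      factorial_succ m]
    push_cast
    field_simp
    ring

theorem binomConv_one_one_two_mul : ∀ r : ℕ, binomConv (1 : ℚ) 1 (2 * r) = (2 * r)!
  | 0 => by simp [binomConv]
  | r + 1 => by
    rw [show 2 * (r + 1) = 2 * r + 2 by ring, binomConv_add_two, binomConv_one_one_two_mul r,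
      factorial_succ, factorial_succ]
    push_cast
    ring

theorem binomConv_two_two_two_mul : ∀ r : ℕ, binomConv (2 : ℚ) 2 (2 * r) = (2 * r)! * (r + 1)
  | 0 => by simp [binomConv]
  | r + 1 => by
    rw [show 2 * (r + 1) = 2 * r + 2 by ring, binomConv_add_two, binomConv_two_two_two_mul r,
      factorial_succ, factorial_succ]
    push_cast
    ring

theorem det_weighted_condEntry {s m : ℕ} {A : Matrix (Fin m) (Fin m) ℚ}
    (hA : ∀ a b : Fin m, A a b = -((s + a + 1)! * condWeight (s + a) *
      (condWeight (s + b) * condEntry 1 1 (s + a) (s + b)))) :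
    A.det = (-1) ^ m * binomConv (1 + s : ℚ) (1 + s) m *
      ∏ k ∈ range m, ((s + k + 1)! * condWeight (s + k) ^ 2 * condFactor 1 1 s s k) := by
  have hs : (1 : ℚ) + 2 * s - s = 1 + s := by ring
  have A_eq : A = -of fun a b : Fin m => (s + a + 1)! * condWeight (s + a) *
      (of fun a b : Fin m => condWeight (s + b) *
        (of fun a b : Fin m => condEntry 1 1 (s + a) (s + b)) a b) a b := Matrix.ext hA
  rw [A_eq, det_neg, det_mul_column, det_mul_row, det_condEntry, condMinor, hs, Fintype.card_fin,
    Fin.prod_univ_eq_prod_range (fun a => ((s + a + 1)! : ℚ) * condWeight (s + a)),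
    Fin.prod_univ_eq_prod_range (fun a => condWeight (s + a))]
  simp only [prod_mul_distrib, prod_pow]
  ring

/-- The matrix whose rows are the coefficient vectors of `stepPoly n 0, …, stepPoly n n`. -/
noncomputable def stepMatrix (n : ℕ) : Matrix (Fin (n + 1)) (Fin (2 * n + 1)) ℚ :=
  of fun i a => (stepPoly n i).coeff a

/-- The matrix obtained from `stepMatrix n` by subtracting from each row twice its predecessor. -/
noncomputable def reducedStepMatrix (n : ℕ) : Matrix (Fin (n + 1)) (Fin (2 * n + 1)) ℚ :=
  of (vecCons (Pi.single (Fin.last _) 1) (diffMatrix n))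

theorem minorSum_stepMatrix (n : ℕ) : minorSum (stepMatrix n) = minorSum (reducedStepMatrix n) := by
  refine sum_congr rfl fun s _ =>
    det_eq_of_forall_row_eq_smul_add_pred (fun _ => 2) (fun a => ?_) (fun i a => ?_)
  · simp [stepMatrix, reducedStepMatrix, stepPoly, coeff_X_pow, Pi.single_apply, Fin.ext_iff]
  · change (stepPoly n (i + 1)).coeff (s a) =
      ((1 - X) * diffPoly n i).coeff (s a) + 2 * (stepPoly n i).coeff (s a)
    rw [stepPoly_succ i.is_lt, coeff_add, coeff_ofNat_mul, add_comm]

theorem minorSum_stepMatrix_of_even {n : ℕ} (hn : Even n) :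
    minorSum (stepMatrix n) = minorSum (diffMatrix n) := by
  rw [minorSum_stepMatrix, minorSum_eq_sum_of_even hn, Fin.sum_univ_succ]
  have sum_row_succ (i : Fin n) : ∑ b, reducedStepMatrix n i.succ b = 0 := sum_diffMatrix i
  have sum_row_zero : ∑ b, reducedStepMatrix n 0 b = 1 := by simp [reducedStepMatrix]
  simp only [sum_row_succ, sum_row_zero, mul_zero, zero_mul, sum_const_zero, add_zero, mul_one,
    Fin.val_zero, pow_zero, one_mul]
  rfl

theorem coeff_one_add_X_mul_diffPoly_two_mul {n j : ℕ} (hj : j < n) :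
    ((1 + X) * diffPoly n j).coeff (2 * n) = if j = 0 then 2 else 0 := by
  rw [← Nat.sub_zero (2 * n), ← revAt_le (zero_le _), ← coeff_reflect,
    reflect_one_add_X_mul_diffPoly hj]
  simp [mul_coeff_zero, coeff_X_pow, coeff_one_add_X_pow, eq_comm]

theorem minorSum_stepMatrix_of_odd {n : ℕ} (hn : Odd (n + 1)) : minorSum (stepMatrix (n + 1)) =
    -2 * minorSum ((diffMatrix (n + 1)).submatrix Fin.succ id) := by
  have sgnGram_zero_succ (j : Fin (n + 1)) :
      sgnGram (reducedStepMatrix (n + 1)) 0 j.succ = if (j : ℕ) = 0 then -2 else 0 := by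
    have h : sgnGram (reducedStepMatrix (n + 1)) 0 j.succ =
        (sgnMatrix ℚ (2 * (n + 1) + 1) * (diffMatrix (n + 1))ᵀ) (Fin.last _) j := by
      rw [sgnGram, Matrix.mul_assoc]
      simp [Matrix.mul_apply, reducedStepMatrix, Pi.single_apply]
    rw [h, sgnMatrix_mul_transpose_diffMatrix, Fin.val_last,
      coeff_one_add_X_mul_diffPoly_two_mul j.is_lt, apply_ite Neg.neg, neg_zero]
  rw [minorSum_stepMatrix, minorSum_eq_sum_of_odd hn, Fin.sum_univ_succ]
  simp only [sgnGram_zero_succ, if_true, Fin.val_zero, Fin.val_succ, Nat.succ_ne_zero, if_false,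
    mul_zero, zero_mul, sum_const_zero, add_zero, pow_zero, one_mul]
  rfl

theorem minorSum_stepMatrix_sq (n : ℕ) : minorSum (stepMatrix n) ^ 2 = asmProd (n + 1) ^ 2 := by
  obtain ⟨r, rfl | rfl⟩ := n.even_or_odd'
  · rw [minorSum_stepMatrix_of_even (even_two_mul r), minorSum_sq (even_two_mul r),
      asmProd_succ_sq, det_weighted_condEntry (s := 0) fun a b => by
        simpa using sgnGram_diffMatrix a b]
    simp [binomConv_one_one_two_mul]
  · rw [minorSum_stepMatrix_of_odd (odd_two_mul_add_one r), mul_pow, minorSum_sq (even_two_mul r),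
      asmProd_add_two_sq, det_weighted_condEntry (s := 1) fun a b => by
        simpa [add_comm 1, sgnGram_submatrix] using sgnGram_diffMatrix a.succ b.succ]
    simp only [Nat.cast_one, one_add_one_eq_two, binomConv_two_two_two_mul, add_comm 1, add_assoc,
      (even_two_mul r).neg_one_pow]
    push_cast
    ring

end GramMatrix

section Histories

/-- One time step of the particle system: the particles in `e` move one site to the right. -/
def moveParticles (O e : Finset ℕ) : Finset ℕ := O \ e ∪ e.image (· + 1)

theorem mem_moveParticles {O e : Finset ℕ} {x : ℕ} :
    x ∈ moveParticles O e ↔ x ∈ O ∧ x ∉ e ∨ ∃ y ∈ e, y + 1 = x := by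
  simp only [moveParticles, mem_union, mem_sdiff, mem_image]

/-- The set `e` of particles of the configuration `O` may move at time `j`: they sit on the sites
`0, …, 2j`, and none of them runs into a particle that stays. -/
structure ValidMove (j : ℕ) (O e : Finset ℕ) : Prop where
  subset : e ⊆ O
  le : ∀ x ∈ e, x ≤ 2 * j
  succ_mem : ∀ x ∈ e, x + 1 ∈ O → x + 1 ∈ e

/-- The particle configuration after the first `k` moves of `e`. -/
def configAt (O : Finset ℕ) (e : ℕ → Finset ℕ) : ℕ → Finset ℕ
  | 0 => O
  | k + 1 => moveParticles (configAt O e k) (e k)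

theorem configAt_shift (O : Finset ℕ) (e : ℕ → Finset ℕ) (k : ℕ) :
    configAt (moveParticles O (e 0)) (fun i => e (i + 1)) k = configAt O e (k + 1) := by
  induction k with
  | zero => rfl
  | succ k ih => rw [configAt, ih, ← configAt]

/-- The sequences of `r` valid moves that start from the configuration `O` at time `j`, continued
by empty moves. -/
def histories (r j : ℕ) (O : Finset ℕ) : Set (ℕ → Finset ℕ) :=
  {e | (∀ k < r, ValidMove (j + k) (configAt O e k) (e k)) ∧ ∀ k, r ≤ k → e k = ∅}

/-- A history with at least one step is a first move followed by a shorter history. -/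
def historiesSuccEquiv (r j : ℕ) (O : Finset ℕ) : histories (r + 1) j O ≃
    Σ e : {e // ValidMove j O e}, histories r (j + 1) (moveParticles O e) where
  toFun e := ⟨⟨e.1 0, e.2.1 0 r.succ_pos⟩, fun i => e.1 (i + 1), fun k hk => by
    rw [configAt_shift, add_assoc, add_comm 1]
    exact e.2.1 (k + 1) (by omega), fun k hk => e.2.2 _ (by omega)⟩
  invFun p := ⟨fun k => Nat.casesOn k p.1.1 p.2.1, by
    refine ⟨fun k hk => ?_, fun k hk => ?_⟩
    · cases k with
      | zero => exact p.1.2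
      | succ k =>
        rw [← configAt_shift, ← add_assoc, add_right_comm]
        exact p.2.2.1 k (by omega)
    · cases k with
      | zero => omega
      | succ k => exact p.2.2.2 k (by omega)⟩
  left_inv e := by
    ext k : 2
    cases k <;> rfl
  right_inv p := rfl

theorem histories_zero (j : ℕ) (O : Finset ℕ) : histories 0 j O = {fun _ => ∅} := by
  ext e
  simp [histories, funext_iff]

instance finite_validMove (j : ℕ) (O : Finset ℕ) : Finite {e // ValidMove j O e} :=
  (O.powerset.finite_toSet.subset (t := {e | ValidMove j O e})
    fun _ he => mem_coe.2 (mem_powerset.2 he.subset)).to_subtype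

instance finite_histories (r j : ℕ) (O : Finset ℕ) : Finite (histories r j O) := by
  induction r generalizing j O with
  | zero => rw [histories_zero]; infer_instance
  | succ r ih =>
    have (e : {e // ValidMove j O e}) := ih (j + 1) (moveParticles O e)
    exact Finite.of_equiv _ (historiesSuccEquiv r j O).symm

open scoped Classical in
theorem card_histories_succ (r j : ℕ) (O : Finset ℕ) : Nat.card (histories (r + 1) j O) =
    ∑ e ∈ O.powerset with ValidMove j O e, Nat.card (histories r (j + 1) (moveParticles O e)) := by
  have := Fintype.ofFinite {e // ValidMove j O e}
  rw [Nat.card_congr (historiesSuccEquiv r j O), Nat.card_sigma]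
  symm
  refine sum_subtype _ (fun e => ?_) _
  simpa only [mem_filter, mem_powerset, and_iff_right_iff_imp] using ValidMove.subset

end Histories

section Configurations

open Matrix Polynomial

variable {n j : ℕ} {o : Fin (n + 1) → ℕ} {s : Finset (Fin (n + 1))}

/-- The possible positions `o 0 < o 1 < ⋯ < o n` of the particles at time `j`, if the process
starts at time `0` from `0, 2, …, 2n`: only the particles up to the `j`-th one may have moved. -/
structure IsParticleConfig (j : ℕ) (o : Fin (n + 1) → ℕ) : Prop where
  strictMono : StrictMono o
  eq_two_mul : ∀ i : Fin (n + 1), j < i → o i = 2 * i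
  le_two_mul : ∀ i : Fin (n + 1), i ≤ j → o i ≤ 2 * j

theorem IsParticleConfig.le_two_mul_iff (ho : IsParticleConfig j o) (i : Fin (n + 1)) :
    o i ≤ 2 * j ↔ i ≤ j := by
  refine ⟨fun h => ?_, ho.le_two_mul i⟩
  by_contra! hi
  have := ho.eq_two_mul i hi
  omega

/-- The positions of the particles after those with index in `s` have moved. -/
def advance (o : Fin (n + 1) → ℕ) (s : Finset (Fin (n + 1))) (i : Fin (n + 1)) : ℕ :=
  if i ∈ s then o i + 1 else o i

/-- The particles with index in `s` may move at time `j`, without collisions. -/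
def CanAdvance (j : ℕ) (o : Fin (n + 1) → ℕ) (s : Finset (Fin (n + 1))) : Prop :=
  (∀ i ∈ s, i ≤ j) ∧ (advance o s).Injective

theorem moveParticles_image (ho : StrictMono o) :
    moveParticles (univ.image o) (s.image o) = univ.image (advance o s) := by
  rw [moveParticles, ← image_sdiff _ _ ho.injective, image_image, ← sdiff_union_of_subset
    (subset_univ s), image_union, sdiff_union_of_subset (subset_univ s)]
  congr 1 <;> refine image_congr fun i hi => ?_
  · exact (if_neg (mem_sdiff.1 hi).2).symm
  · exact (if_pos hi).symm

theorem IsParticleConfig.succ (ho : IsParticleConfig j o)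
    (hs : CanAdvance j o s) : IsParticleConfig (j + 1) (advance o s) where
  strictMono := by
    refine Monotone.strictMono_of_injective (fun a b hab => ?_) hs.2
    obtain rfl | hab := hab.eq_or_lt
    · rfl
    · have := ho.strictMono hab
      grind [advance, CanAdvance]
  eq_two_mul i hi := by
    rw [advance, if_neg fun h => absurd (hs.1 i h) (by omega), ho.eq_two_mul i (by omega)]
  le_two_mul i hi := by
    have := ho.eq_two_mul i
    have := ho.le_two_mul i
    grind [advance, CanAdvance]

theorem IsParticleConfig.validMove_image_iff (ho : IsParticleConfig j o) :
    ValidMove j (univ.image o) (s.image o) ↔ CanAdvance j o s := by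
  have collision_free : (∀ x ∈ s.image o, x + 1 ∈ univ.image o → x + 1 ∈ s.image o) ↔
      (advance o s).Injective := by
    have hinj := ho.strictMono.injective
    have mem_image_iff (k : Fin (n + 1)) : o k ∈ s.image o ↔ k ∈ s := hinj.mem_finset_image
    rw [forall_mem_image]
    refine ⟨fun h a b hab => ?_, fun h i hi hmem => ?_⟩
    · unfold advance at hab
      split_ifs at hab with ha hb hb
      · exact hinj (Nat.succ_injective hab)
      · exact absurd ((mem_image_iff b).1 (hab ▸ h ha (hab ▸ mem_image_of_mem o (mem_univ b)))) hb
      · exact absurd ((mem_image_iff a).1 (hab ▸ h hb (hab ▸ mem_image_of_mem o (mem_univ a)))) ha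
      · exact hinj hab
    · obtain ⟨k, -, hk⟩ := mem_image.1 hmem
      rw [← hk, mem_image_iff]
      by_contra hks
      have : k = i := h (by rw [advance, advance, if_neg hks, if_pos hi, hk])
      exact hks (this ▸ hi)
  constructor
  · exact fun h => ⟨fun i hi => (ho.le_two_mul_iff i).1 (h.le _ (mem_image_of_mem _ hi)),
      collision_free.1 h.succ_mem⟩
  · refine fun h => ⟨image_subset_image (subset_univ _), ?_, collision_free.2 h.2⟩
    simpa only [forall_mem_image, ho.le_two_mul_iff] using h.1

/-- The matrix whose maximal minors add up to the number of histories from the configuration `o`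
at time `j`: the `i`-th particle may move at the times `max i j, …, n - 1`. -/
noncomputable def configMatrix (n j : ℕ) (o : Fin (n + 1) → ℕ) :
    Matrix (Fin (n + 1)) (Fin (2 * n + 1)) ℚ :=
  of fun i a => (X ^ o i * (1 + X) ^ (n - max (i : ℕ) j) : ℚ[X]).coeff a

theorem configMatrix_eq_add (hj : j < n) (o : Fin (n + 1) → ℕ) :
    configMatrix n j o = (of fun (i : Fin (n + 1)) a =>
      if i ≤ j then configMatrix n (j + 1) (fun i => o i + 1) i a else 0) +
        configMatrix n (j + 1) o := by
  ext i a
  rw [Matrix.add_apply, of_apply]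
  split_ifs with h
  · simp only [configMatrix, of_apply]
    rw [← coeff_add, max_eq_right h, max_eq_right (by omega),
      show n - j = n - (j + 1) + 1 by omega]
    congr 1
    ring
  · simp only [configMatrix, of_apply]
    rw [zero_add, max_eq_left (by omega), max_eq_left (by omega)]

theorem IsParticleConfig.minorSum_configMatrix_self (ho : IsParticleConfig n o) :
    minorSum (configMatrix n n o) = 1 := by
  have hlt (i : Fin (n + 1)) : o i < 2 * n + 1 :=
    Nat.lt_succ_of_le (ho.le_two_mul i (Nat.le_of_lt_succ i.is_lt))
  convert minorSum_one_submatrix (R := ℚ) (t := fun i => ⟨o i, hlt i⟩) fun _ _ h => ho.strictMono h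
  ext i a
  simp [configMatrix, coeff_X_pow, one_apply, Fin.ext_iff, eq_comm]

theorem IsParticleConfig.minorSum_configMatrix_eq_zero (ho : IsParticleConfig j o)
    (hs : ∀ i ∈ s, i ≤ j) (h : ¬(advance o s).Injective) :
    minorSum (configMatrix n (j + 1) (advance o s)) = 0 := by
  obtain ⟨a, b, hab, hne⟩ : ∃ a b, advance o s a = advance o s b ∧ a ≠ b := by
    simpa [Function.Injective] using h
  have hmax : max (a : ℕ) (j + 1) = max (b : ℕ) (j + 1) := by
    have := ho.eq_two_mul a
    have := ho.eq_two_mul b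
    have := ho.le_two_mul a
    have := ho.le_two_mul b
    grind [advance]
  refine minorSum_eq_zero_of_row_eq hne (funext fun c => ?_)
  simp only [configMatrix, of_apply, hab, hmax]

open scoped Classical in
theorem IsParticleConfig.minorSum_configMatrix (ho : IsParticleConfig j o) (hj : j < n) :
    minorSum (configMatrix n j o) =
      ∑ s : Finset (Fin (n + 1)) with CanAdvance j o s,
        minorSum (configMatrix n (j + 1) (advance o s)) := by
  rw [configMatrix_eq_add hj, minorSum_add, sum_filter]
  refine sum_congr rfl fun s _ => ?_
  by_cases hs : ∀ i ∈ s, i ≤ j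
  · convert_to minorSum (configMatrix n (j + 1) (advance o s)) = _
    · congr 1
      ext i a
      by_cases hi : i ∈ s <;> simp [Finset.piecewise, hi, hs i, configMatrix, advance]
    · split_ifs with h
      · rfl
      · exact ho.minorSum_configMatrix_eq_zero hs fun hinj => h ⟨hs, hinj⟩
  · rw [if_neg fun h => hs h.1]
    push Not at hs
    obtain ⟨i, hi, hij⟩ := hs
    exact minorSum_eq_zero_of_row_zero i fun a => by simp [Finset.piecewise, hi, hij]

open scoped Classical in
theorem IsParticleConfig.card_histories_add_one (ho : IsParticleConfig j o) (r : ℕ) :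
    Nat.card (histories (r + 1) j (univ.image o)) =
      ∑ s : Finset (Fin (n + 1)) with CanAdvance j o s,
        Nat.card (histories r (j + 1) (univ.image (advance o s))) := by
  rw [card_histories_succ, powerset_image, powerset_univ, filter_image,
    sum_image (image_injective ho.strictMono.injective).injOn]
  simp only [ho.validMove_image_iff, moveParticles_image ho.strictMono]

theorem IsParticleConfig.card_histories (ho : IsParticleConfig j o) {r : ℕ} (hr : j + r = n) :
    (Nat.card (histories r j (univ.image o)) : ℚ) = minorSum (configMatrix n j o) := by
  classical
  induction r generalizing j o with
  | zero =>
    obtain rfl : j = n := hr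
    rw [histories_zero, ho.minorSum_configMatrix_self]
    simp
  | succ r ih =>
    rw [ho.card_histories_add_one, ho.minorSum_configMatrix (by omega), Nat.cast_sum]
    refine sum_congr rfl fun s hs => ?_
    exact ih (ho.succ (mem_filter.1 hs).2) (by omega)

/-- The initial configuration `{0, 2, …, 2n}`. -/
def initialConfig (n : ℕ) : Finset ℕ := univ.image fun i : Fin (n + 1) => 2 * (i : ℕ)

theorem card_histories_initialConfig (n : ℕ) :
    (Nat.card (histories n 0 (initialConfig n)) : ℚ) = asmProd (n + 1) := by
  have isParticleConfig : IsParticleConfig 0 fun i : Fin (n + 1) => 2 * (i : ℕ) :=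
    ⟨fun a b h => by simpa using h, fun _ _ => rfl, fun i h => by simpa using h⟩
  have configMatrix_eq : configMatrix n 0 (fun i => 2 * i) =
      (stepMatrix n).submatrix Fin.revPerm id := by
    ext i a
    simp only [configMatrix, stepMatrix, submatrix_apply, of_apply, Fin.revPerm_apply, id,
      stepPoly, Fin.val_rev]
    congr 3 <;> omega
  have asmProd_nonneg : 0 ≤ asmProd (n + 1) := prod_nonneg fun i _ => by positivity
  refine (sq_eq_sq₀ (Nat.cast_nonneg _) asmProd_nonneg).1 ?_
  rw [initialConfig, isParticleConfig.card_histories (zero_add n), configMatrix_eq,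
    minorSum_submatrix_perm, mul_pow, minorSum_stepMatrix_sq, ← Int.cast_pow,
    ← Units.val_pow_eq_pow_val, Int.units_sq]
  simp

end Configurations

section MatchingRelations

variable {V W : Type*}

/-- A perfect matching of the induced subgraph `G[S]`, as a relation on the ambient vertex type. -/
structure IsMatchingRel (G : SimpleGraph V) (S : Set V) (R : V → V → Prop) : Prop where
  adj : ∀ {v w}, R v w → G.Adj v w
  symm : ∀ {v w}, R v w → R w v
  existsUnique : ∀ {v}, v ∈ S → ∃! w, R v w

theorem IsMatchingRel.eq_of_rel {G : SimpleGraph V} {S : Set V} {R : V → V → Prop}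
    (hR : IsMatchingRel G S R) (hS : ∀ {v w}, G.Adj v w → v ∈ S) {v w w' : V}
    (h : R v w) (h' : R v w') : w = w' :=
  (hR.existsUnique (hS (hR.adj h))).unique h h'

/-- The perfect matchings of `G[S]`, in terms of any injective labelling `φ` of vertices that
reaches all of `S`. -/
def perfectMatchingEquiv {G : SimpleGraph V} {S : Set V} (hS : ∀ {v w}, G.Adj v w → v ∈ S)
    (φ : W ↪ V) (hφ : S ⊆ Set.range φ) : {M : (G.induce S).Subgraph // M.IsPerfectMatching} ≃
      {R // IsMatchingRel (G.comap φ) (φ ⁻¹' S) R} where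
  toFun M := ⟨fun v w => ∃ hv hw, M.1.Adj ⟨φ v, hv⟩ ⟨φ w, hw⟩, by
    refine ⟨fun ⟨_, _, h⟩ => h.adj_sub, fun ⟨hv, hw, h⟩ => ⟨hw, hv, h.symm⟩, fun {v} hv => ?_⟩
    obtain ⟨⟨_, hw⟩, h, unique⟩ := SimpleGraph.Subgraph.isPerfectMatching_iff.1 M.2 ⟨φ v, hv⟩
    obtain ⟨w, rfl⟩ := hφ hw
    exact ⟨w, ⟨hv, hw, h⟩, fun w' ⟨_, hw', h'⟩ =>
      φ.injective (congrArg Subtype.val (unique ⟨φ w', hw'⟩ h'))⟩⟩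
  invFun R := ⟨{
      verts := Set.univ
      Adj := fun a b => Relation.Map R.1 φ φ a b
      adj_sub := by
        rintro ⟨_, _⟩ ⟨_, _⟩ ⟨v, w, h, rfl, rfl⟩
        exact R.2.adj h
      edge_vert := fun _ => Set.mem_univ _
      symm := ⟨by
        rintro ⟨_, _⟩ ⟨_, _⟩ ⟨v, w, h, rfl, rfl⟩
        exact ⟨w, v, R.2.symm h, rfl, rfl⟩⟩ }, by
    refine SimpleGraph.Subgraph.isPerfectMatching_iff.2 fun ⟨a, ha⟩ => ?_
    obtain ⟨v, rfl⟩ := hφ ha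
    obtain ⟨w, h, unique⟩ := R.2.existsUnique ha
    refine ⟨⟨φ w, hS (R.2.adj (R.2.symm h))⟩, ⟨v, w, h, rfl, rfl⟩, ?_⟩
    rintro ⟨_, _⟩ ⟨v', w', h', hv, rfl⟩
    obtain rfl := φ.injective hv
    exact Subtype.ext (congrArg φ (unique w' h'))⟩
  left_inv M := by
    refine Subtype.ext (SimpleGraph.Subgraph.ext M.2.2.verts_eq_univ.symm ?_)
    ext ⟨a, ha⟩ ⟨b, hb⟩
    constructor
    · rintro ⟨v, w, ⟨_, _, h⟩, rfl, rfl⟩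
      exact h
    · intro h
      obtain ⟨v, rfl⟩ := hφ ha
      obtain ⟨w, rfl⟩ := hφ hb
      exact ⟨v, w, ⟨ha, hb, h⟩, rfl, rfl⟩
  right_inv R := by
    ext v w
    simp only [Relation.map_apply_apply φ.injective φ.injective]
    exact ⟨fun ⟨_, _, h⟩ => h, fun h => ⟨hS (R.2.adj h), hS (R.2.adj (R.2.symm h)), h⟩⟩

end MatchingRelations

section StripGraph

/-- The vertices of `G_n`, in strip coordinates: the strip `j` consists of the vertices `(x, y)`
with `n - j = ⌊(y - x) / 2⌋`, and the constructor records the parity of `y - x`. -/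
inductive StripVertex
  | odd (j x : ℕ)
  | even (j x : ℕ)

namespace StripVertex

/-- The lattice point with the given strip coordinates. -/
def toLattice (n : ℕ) : StripVertex ↪ ℤ × ℤ where
  toFun
    | odd j x => (x, x + 2 * (n - j) + 1)
    | even j x => (x, x + 2 * (n - j))
  inj' := by
    rintro (⟨j, x⟩ | ⟨j, x⟩) (⟨i, y⟩ | ⟨i, y⟩) h <;> simp only [Prod.mk.injEq] at h <;>
      simp only [odd.injEq, even.injEq, reduceCtorEq] <;> omega

@[simp]
theorem toLattice_odd (n j x : ℕ) :
    toLattice n (odd j x) = ((x : ℤ), (x : ℤ) + 2 * ((n : ℤ) - j) + 1) :=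
  rfl

@[simp]
theorem toLattice_even (n j x : ℕ) :
    toLattice n (even j x) = ((x : ℤ), (x : ℤ) + 2 * ((n : ℤ) - j)) :=
  rfl

/-- The vertices of `G_n`, in strip coordinates. -/
def vertices (n : ℕ) : Set StripVertex := toLattice n ⁻¹' Vset n

variable {n j x : ℕ}

theorem odd_mem_vertices :
    odd j x ∈ vertices n ↔ j ≤ n ∧ x ≤ 2 * j ∧ ¬(n % 2 = 1 ∧ x = 2 * n) := by
  simp only [vertices, Vset, memV, Set.mem_preimage, Set.mem_ofPred_eq, toLattice_odd]
  omega

theorem even_mem_vertices : even j x ∈ vertices n ↔ j ≤ n ∧ x ≤ 2 * j + 1 ∧ x ≤ 2 * n := by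
  simp only [vertices, Vset, memV, Set.mem_preimage, Set.mem_ofPred_eq, toLattice_even]
  omega

theorem Vset_subset_range_toLattice (n : ℕ) : Vset n ⊆ Set.range (toLattice n) := by
  rintro ⟨a, b⟩ h
  simp only [Vset, memV, Set.mem_ofPred_eq] at h
  obtain ⟨k, hk | hk⟩ := (b - a).even_or_odd'
  · exact ⟨even (n - k).toNat a.toNat, by simp; omega⟩
  · exact ⟨odd (n - k).toNat a.toNat, by simp; omega⟩

/-- The graph `G_n` in strip coordinates. -/
abbrev stripGraph (n : ℕ) : SimpleGraph StripVertex := (Gph n).comap (toLattice n)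

theorem mem_Vset_of_adj {v w : ℤ × ℤ} (h : (Gph n).Adj v w) : v ∈ Vset n := by
  simp only [Gph, edgeRel] at h
  simp only [Vset, memV, Set.mem_ofPred_eq]
  grind

theorem not_stripGraph_adj_odd_odd {i y : ℕ} : ¬(stripGraph n).Adj (odd j x) (odd i y) := by
  simp only [SimpleGraph.comap_adj, Gph, edgeRel, toLattice_odd, Int.odd_iff]
  omega

theorem stripGraph_adj_odd_even {i y : ℕ} : (stripGraph n).Adj (odd j x) (even i y) ↔
    odd j x ∈ vertices n ∧
      (i = j ∧ (y = x ∨ y = x + 1 ∧ x < 2 * n) ∨ i + 1 = j ∧ y = x ∧ x < 2 * j) := by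
  simp only [odd_mem_vertices, SimpleGraph.comap_adj, Gph, edgeRel, toLattice_odd,
    toLattice_even, Int.odd_iff]
  constructor
  · rintro ((h | h | h) | (h | h | h)) <;> omega
  · rintro ⟨h, ⟨rfl, rfl | h'⟩ | h'⟩
    · exact Or.inr (Or.inr (Or.inl (by omega)))
    · exact Or.inl (Or.inl (by omega))
    · exact Or.inl (Or.inr (Or.inl (by omega)))

theorem stripGraph_adj_even_even {i y : ℕ} : (stripGraph n).Adj (even j x) (even i y) ↔
    j = n ∧ i = n ∧ (x < 2 * n ∧ y = x + 1 ∨ y < 2 * n ∧ x = y + 1) := by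
  simp only [SimpleGraph.comap_adj, Gph, edgeRel, toLattice_even, Int.odd_iff]
  omega

end StripVertex

end StripGraph

section LastMove

/-- An odd number of the sites to the left of `x` are empty. -/
def OddHoles (O : Finset ℕ) (x : ℕ) : Prop := Odd (range x \ O).card

instance decidablePred_oddHoles (O : Finset ℕ) : DecidablePred (OddHoles O) :=
  fun _ => inferInstanceAs (Decidable (Odd _))

variable {O : Finset ℕ} {x : ℕ}

theorem not_oddHoles_zero (O : Finset ℕ) : ¬OddHoles O 0 := by simp [OddHoles]

theorem oddHoles_succ_of_mem (h : x ∈ O) : OddHoles O (x + 1) ↔ OddHoles O x := by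
  rw [OddHoles, OddHoles, range_add_one, insert_sdiff_of_mem _ h]

theorem oddHoles_succ_of_notMem (h : x ∉ O) : OddHoles O (x + 1) ↔ ¬OddHoles O x := by
  rw [OddHoles, OddHoles, range_add_one, insert_sdiff_of_notMem _ h,
    card_insert_of_notMem (by simp), Nat.odd_add_one]

/-- The move of the particles with an odd number of empty sites to their left. After this move,
the empty sites come in pairs of neighbours. -/
def lastMove (O : Finset ℕ) : Finset ℕ := O.filter (OddHoles O)

theorem mem_lastMove : x ∈ lastMove O ↔ x ∈ O ∧ OddHoles O x := mem_filter

theorem validMove_lastMove {j : ℕ} (h : ∀ x ∈ O, x ≤ 2 * j) : ValidMove j O (lastMove O) where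
  subset := filter_subset _ _
  le x hx := h x (mem_lastMove.1 hx).1
  succ_mem x hx hx' := by
    rw [mem_lastMove] at hx ⊢
    exact ⟨hx', (oddHoles_succ_of_mem hx.1).2 hx.2⟩

theorem succ_notMem_moveParticles_lastMove (hx : x ∉ moveParticles O (lastMove O))
    (h : ¬OddHoles O x) : x + 1 ∉ moveParticles O (lastMove O) ∧ OddHoles O (x + 1) := by
  simp only [mem_moveParticles, mem_lastMove, Nat.add_right_cancel_iff, exists_eq_right] at hx ⊢
  have hxO : x ∉ O := fun hxO => hx (Or.inl ⟨hxO, fun h' => h h'.2⟩)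
  have h' : OddHoles O (x + 1) := (oddHoles_succ_of_notMem hxO).2 h
  exact ⟨by tauto, h'⟩

theorem notMem_moveParticles_lastMove (hx : x + 1 ∉ moveParticles O (lastMove O))
    (h : OddHoles O (x + 1)) : x ∉ moveParticles O (lastMove O) ∧ ¬OddHoles O x := by
  simp only [mem_moveParticles, mem_lastMove, Nat.add_right_cancel_iff, exists_eq_right] at hx ⊢
  have hxO : x ∉ O := fun hxO => hx (Or.inr ⟨hxO, (oddHoles_succ_of_mem hxO).1 h⟩)
  have h' : ¬OddHoles O x := (oddHoles_succ_of_notMem hxO).1 h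
  refine ⟨?_, h'⟩
  rintro (hx' | ⟨y, hy, rfl⟩)
  · exact hxO hx'.1
  · exact h' ((oddHoles_succ_of_mem hy.1).2 hy.2)

end LastMove

section InitialConfig

theorem mem_initialConfig {n x : ℕ} : x ∈ initialConfig n ↔ x % 2 = 0 ∧ x ≤ 2 * n := by
  simp only [initialConfig, mem_image, mem_univ, true_and, Fin.exists_iff, exists_prop]
  exact ⟨by rintro ⟨i, hi, rfl⟩; omega, fun h => ⟨x / 2, by omega⟩⟩

theorem card_initialConfig (n : ℕ) : (initialConfig n).card = n + 1 := by
  rw [initialConfig, card_image_of_injective _ fun a b h => by simpa [Fin.ext_iff] using h,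
    card_univ, Fintype.card_fin]

theorem ValidMove.card_moveParticles {j : ℕ} {O e : Finset ℕ} (h : ValidMove j O e) :
    (moveParticles O e).card = O.card := by
  have hdisj : Disjoint (O \ e) (e.image (· + 1)) := by
    simp only [disjoint_right, mem_image, mem_sdiff]
    rintro _ ⟨y, hy, rfl⟩ hy'
    exact hy'.2 (h.succ_mem y hy hy'.1)
  rw [moveParticles, card_union_of_disjoint hdisj,
    card_image_of_injective _ (add_left_injective 1), card_sdiff_add_card_eq_card h.subset]

/-- The particle configuration at time `j` of a history that starts from `initialConfig n`. -/
abbrev configFrom (n : ℕ) (e : ℕ → Finset ℕ) (j : ℕ) : Finset ℕ := configAt (initialConfig n) e j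

variable {n j x : ℕ} {e : ℕ → Finset ℕ}

theorem card_configFrom (he : ∀ k < j, ValidMove k (configFrom n e k) (e k)) :
    (configFrom n e j).card = n + 1 := by
  induction j with
  | zero => exact card_initialConfig n
  | succ j ih =>
    exact (he j j.lt_succ_self).card_moveParticles.trans (ih fun k hk => he k (by omega))

theorem mem_configFrom_of_le (he : ∀ k < j, ValidMove k (configFrom n e k) (e k))
    (hx : 2 * j ≤ x) : x ∈ configFrom n e j ↔ x % 2 = 0 ∧ x ≤ 2 * n := by
  induction j with
  | zero => exact mem_initialConfig
  | succ j ih =>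
    have hle := (he j j.lt_succ_self).le
    rw [← ih (fun k hk => he k (by omega)) (by omega), configFrom, configAt, mem_moveParticles]
    refine ⟨?_, fun h => Or.inl ⟨h, fun hxe => by have := hle x hxe; omega⟩⟩
    rintro (h | ⟨y, hy, rfl⟩)
    · exact h.1
    · have := hle y hy
      omega

theorem oddHoles_two_mul (he : ∀ k < n, ValidMove k (configFrom n e k) (e k)) :
    OddHoles (configFrom n e n) (2 * n) ↔ n % 2 = 1 := by
  have hinter : configFrom n e n = insert (2 * n) (range (2 * n) ∩ configFrom n e n) := by
    ext x
    rcases lt_or_ge x (2 * n) with hx | hx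
    · simp [hx, hx.ne]
    · simp only [mem_insert, mem_inter, mem_range, mem_configFrom_of_le he hx]
      omega
  have hcard := card_configFrom he
  rw [hinter, card_insert_of_notMem (by simp)] at hcard
  have := card_sdiff_add_card_inter (range (2 * n)) (configFrom n e n)
  rw [card_range] at this
  rw [OddHoles, Nat.odd_iff]
  omega

end InitialConfig

section HistoryToMatching

variable {n j x : ℕ} {e : ℕ → Finset ℕ}

/-- The moves of a history of length `n`, extended by `lastMove` at time `n`. -/
def moveAt (n : ℕ) (e : ℕ → Finset ℕ) (j : ℕ) : Finset ℕ :=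
  if j < n then e j else lastMove (configFrom n e n)

theorem moveAt_of_lt (h : j < n) : moveAt n e j = e j := if_pos h

theorem moveAt_self : moveAt n e n = lastMove (configFrom n e n) := if_neg n.lt_irrefl

variable (he : ∀ k < n, ValidMove k (configFrom n e k) (e k))
include he

theorem validMove_moveAt (hj : j ≤ n) : ValidMove j (configFrom n e j) (moveAt n e j) := by
  rcases hj.lt_or_eq with h | rfl
  · rw [moveAt_of_lt h]
    exact he j h
  · rw [moveAt_self]
    refine validMove_lastMove fun x hx => ?_
    by_contra! hlt
    exact hlt.not_ge ((mem_configFrom_of_le he hlt.le).1 hx).2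

theorem two_mul_mem_configFrom (hj : j ≤ n) : 2 * j ∈ configFrom n e j :=
  (mem_configFrom_of_le (fun k hk => he k (hk.trans_le hj)) le_rfl).2 (by omega)

theorem two_mul_mem_moveAt : 2 * n ∈ moveAt n e n ↔ n % 2 = 1 := by
  rw [moveAt_self, mem_lastMove, oddHoles_two_mul he,
    and_iff_right (two_mul_mem_configFrom he le_rfl)]

omit he

open StripVertex

/-- The neighbour to which the matching of a history joins a vertex. The vertex `odd j x` is
joined to `even j (x + 1)` or to `even j x` if at time `j` the site `x` holds a particle that moves
or stays, and to `even (j - 1) x` if the site is empty; the vertices `even n x` that remain are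
joined in pairs along the diagonal. -/
def partner (n : ℕ) (e : ℕ → Finset ℕ) : StripVertex → StripVertex
  | odd j x =>
    if x ∈ configFrom n e j then
      if x ∈ moveAt n e j then even j (x + 1) else even j x
    else even (j - 1) x
  | even j x =>
    if ∃ y ∈ moveAt n e j, y + 1 = x then odd j (x - 1)
    else if x ∈ configFrom n e j ∧ x ∉ moveAt n e j then odd j x
    else if j < n then odd (j + 1) x
    else if OddHoles (configFrom n e n) x then even n (x - 1)
    else even n (x + 1)

theorem partner_odd_of_mem_moveAt (h : x ∈ moveAt n e j) (h' : x ∈ configFrom n e j) :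
    partner n e (odd j x) = even j (x + 1) := by
  rw [partner, if_pos h', if_pos h]

theorem partner_odd_of_notMem_moveAt (h : x ∈ configFrom n e j) (h' : x ∉ moveAt n e j) :
    partner n e (odd j x) = even j x := by
  rw [partner, if_pos h, if_neg h']

theorem partner_odd_of_notMem (h : x ∉ configFrom n e j) :
    partner n e (odd j x) = even (j - 1) x := by
  rw [partner, if_neg h]

theorem partner_even_of_mem_moveAt (h : x ∈ moveAt n e j) :
    partner n e (even j (x + 1)) = odd j x := by
  rw [partner, if_pos ⟨x, h, rfl⟩, Nat.add_sub_cancel]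

theorem partner_even_of_notMem (h : x ∉ moveParticles (configFrom n e j) (moveAt n e j)) :
    partner n e (even j x) = if j < n then odd (j + 1) x
      else if OddHoles (configFrom n e n) x then even n (x - 1) else even n (x + 1) := by
  rw [mem_moveParticles, not_or] at h
  rw [partner, if_neg h.2, if_neg h.1]

include he

theorem partner_even_of_notMem_moveAt (hj : j ≤ n) (h : x ∈ configFrom n e j)
    (h' : x ∉ moveAt n e j) : partner n e (even j x) = odd j x := by
  rw [partner, if_neg, if_pos ⟨h, h'⟩]
  rintro ⟨y, hy, rfl⟩
  exact h' ((validMove_moveAt he hj).succ_mem y hy h)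

theorem partner_partner_odd (hv : odd j x ∈ vertices n) :
    (stripGraph n).Adj (odd j x) (partner n e (odd j x)) ∧
      partner n e (partner n e (odd j x)) = odd j x := by
  obtain ⟨hj, hx, hmissing⟩ := odd_mem_vertices.1 hv
  by_cases hO : x ∈ configFrom n e j
  · by_cases hm : x ∈ moveAt n e j
    · rw [partner_odd_of_mem_moveAt hm hO, partner_even_of_mem_moveAt hm, stripGraph_adj_odd_even]
      refine ⟨⟨hv, Or.inl ⟨rfl, Or.inr ⟨rfl, ?_⟩⟩⟩, rfl⟩
      by_contra! hlt
      obtain ⟨rfl, rfl⟩ : j = n ∧ x = 2 * n := by omega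
      exact hmissing ⟨(two_mul_mem_moveAt he).1 hm, rfl⟩
    · rw [partner_odd_of_notMem_moveAt hO hm, partner_even_of_notMem_moveAt he hj hO hm,
        stripGraph_adj_odd_even]
      exact ⟨⟨hv, Or.inl ⟨rfl, Or.inl rfl⟩⟩, rfl⟩
  · have hlt : x < 2 * j := hx.lt_of_ne fun h => hO (h ▸ two_mul_mem_configFrom he hj)
    obtain ⟨i, rfl⟩ : ∃ i, j = i + 1 := ⟨j - 1, by omega⟩
    have hi : i < n := hj
    rw [partner_odd_of_notMem hO, Nat.add_sub_cancel, partner_even_of_notMem, if_pos hi,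
      stripGraph_adj_odd_even]
    · exact ⟨⟨hv, Or.inr ⟨rfl, rfl, hlt⟩⟩, rfl⟩
    · rwa [moveAt_of_lt hi]

theorem partner_partner_even_of_notMem (hx : x ≤ 2 * n)
    (h : x ∉ moveParticles (configFrom n e n) (moveAt n e n)) :
    (stripGraph n).Adj (even n x) (partner n e (even n x)) ∧
      partner n e (partner n e (even n x)) = even n x := by
  have h' := h
  rw [moveAt_self] at h'
  rw [partner_even_of_notMem h, if_neg n.lt_irrefl]
  by_cases hodd : OddHoles (configFrom n e n) x
  · obtain ⟨y, rfl⟩ : ∃ y, x = y + 1 :=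
      Nat.exists_eq_succ_of_ne_zero fun h0 => not_oddHoles_zero _ (h0 ▸ hodd)
    obtain ⟨hy, heven⟩ := notMem_moveParticles_lastMove h' hodd
    rw [if_pos hodd, Nat.add_sub_cancel, partner_even_of_notMem (by rwa [moveAt_self]),
      if_neg n.lt_irrefl, if_neg heven, stripGraph_adj_even_even]
    exact ⟨by omega, rfl⟩
  · obtain ⟨hy, hodd'⟩ := succ_notMem_moveParticles_lastMove h' hodd
    have hne : x ≠ 2 * n := by
      rintro rfl
      exact h (mem_moveParticles.2 (Or.inl ⟨two_mul_mem_configFrom he le_rfl, fun hm =>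
        hodd ((oddHoles_two_mul he).2 ((two_mul_mem_moveAt he).1 hm))⟩))
    rw [if_neg hodd, partner_even_of_notMem (by rwa [moveAt_self]), if_neg n.lt_irrefl,
      if_pos hodd', Nat.add_sub_cancel, stripGraph_adj_even_even]
    exact ⟨by omega, rfl⟩

theorem partner_partner_even (hv : even j x ∈ vertices n) :
    (stripGraph n).Adj (even j x) (partner n e (even j x)) ∧
      partner n e (partner n e (even j x)) = even j x := by
  obtain ⟨hj, hx, hx'⟩ := even_mem_vertices.1 hv
  have hvalid := validMove_moveAt he hj
  by_cases h : x ∈ moveParticles (configFrom n e j) (moveAt n e j)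
  · rw [SimpleGraph.adj_comm]
    rcases mem_moveParticles.1 h with ⟨hO, hm⟩ | ⟨y, hy, rfl⟩
    · rw [partner_even_of_notMem_moveAt he hj hO hm, partner_odd_of_notMem_moveAt hO hm,
        stripGraph_adj_odd_even, odd_mem_vertices]
      refine ⟨⟨⟨hj, ?_, ?_⟩, Or.inl ⟨rfl, Or.inl rfl⟩⟩, rfl⟩
      · by_contra! hlt
        have := (mem_configFrom_of_le (fun k hk => he k (by omega)) hlt.le).1 hO
        omega
      · rintro ⟨hn, rfl⟩
        obtain rfl : j = n := by omega
        exact hm ((two_mul_mem_moveAt he).2 hn)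
    · have := hvalid.le y hy
      rw [partner_even_of_mem_moveAt hy, partner_odd_of_mem_moveAt hy (hvalid.subset hy),
        stripGraph_adj_odd_even, odd_mem_vertices]
      exact ⟨⟨by omega, Or.inl ⟨rfl, Or.inr ⟨rfl, hx'⟩⟩⟩, rfl⟩
  · rcases hj.lt_or_eq with hlt | rfl
    · have hO : x ∉ configFrom n e (j + 1) := by rwa [moveAt_of_lt hlt] at h
      rw [partner_even_of_notMem h, if_pos hlt, partner_odd_of_notMem hO, SimpleGraph.adj_comm,
        stripGraph_adj_odd_even, odd_mem_vertices]
      exact ⟨⟨by omega, Or.inr ⟨rfl, rfl, by omega⟩⟩, rfl⟩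
    · exact partner_partner_even_of_notMem he hx' h

theorem partner_partner {v : StripVertex} (hv : v ∈ vertices n) :
    (stripGraph n).Adj v (partner n e v) ∧ partner n e (partner n e v) = v := by
  cases v with
  | odd j x => exact partner_partner_odd he hv
  | even j x => exact partner_partner_even he hv

theorem isMatchingRel_partner : IsMatchingRel (stripGraph n) (vertices n)
    (fun v w => v ∈ vertices n ∧ partner n e v = w) where
  adj := by
    rintro v _ ⟨hv, rfl⟩
    exact (partner_partner he hv).1
  symm := by
    rintro v _ ⟨hv, rfl⟩
    exact ⟨mem_Vset_of_adj (partner_partner he hv).1.symm, (partner_partner he hv).2⟩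
  existsUnique {v} hv := ⟨partner n e v, ⟨hv, rfl⟩, fun _ h => h.2.symm⟩

end HistoryToMatching

section MatchingToHistory

open StripVertex

variable {n j x : ℕ} {R : StripVertex → StripVertex → Prop}

open scoped Classical in
/-- The moves read off from a matching: at time `j`, the particles move on those sites `x` for
which `odd j x` is joined to `even j (x + 1)`. -/
noncomputable def movesOf (n : ℕ) (R : StripVertex → StripVertex → Prop) (j : ℕ) : Finset ℕ :=
  {x ∈ range (2 * j + 1) | j < n ∧ R (odd j x) (even j (x + 1))}

variable (hR : IsMatchingRel (stripGraph n) (vertices n) R)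
include hR

theorem IsMatchingRel.unique {v w w' : StripVertex} (h : R v w) (h' : R v w') : w = w' :=
  hR.eq_of_rel mem_Vset_of_adj h h'

theorem odd_mem_vertices_of_rel {v : StripVertex} (h : R (odd j x) v) : odd j x ∈ vertices n :=
  mem_Vset_of_adj (hR.adj h)

theorem mem_movesOf : x ∈ movesOf n R j ↔ j < n ∧ R (odd j x) (even j (x + 1)) := by
  simp only [movesOf, mem_filter, mem_range, and_iff_right_iff_imp]
  exact fun h => Nat.lt_succ_of_le (odd_mem_vertices.1 (odd_mem_vertices_of_rel hR h.2)).2.1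

theorem rel_odd_cases (hv : odd j x ∈ vertices n) : R (odd j x) (even j x) ∨
    R (odd j x) (even j (x + 1)) ∨ ∃ i, i + 1 = j ∧ R (odd j x) (even i x) := by
  obtain ⟨⟨i, y⟩ | ⟨i, y⟩, h, -⟩ := hR.existsUnique hv
  · exact absurd (hR.adj h) not_stripGraph_adj_odd_odd
  · obtain ⟨-, ⟨rfl, rfl | ⟨rfl, -⟩⟩ | ⟨rfl, rfl, -⟩⟩ := stripGraph_adj_odd_even.1 (hR.adj h)
    · exact Or.inl h
    · exact Or.inr (Or.inl h)
    · exact Or.inr (Or.inr ⟨i, rfl, h⟩)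

theorem rel_even_cases (hv : even j x ∈ vertices n) : R (odd j x) (even j x) ∨
    (∃ y, y + 1 = x ∧ R (odd j y) (even j (y + 1))) ∨ R (odd (j + 1) x) (even j x) ∨
      j = n ∧ (R (even n x) (even n (x + 1)) ∨ ∃ y, y + 1 = x ∧ R (even n y) (even n (y + 1))) := by
  obtain ⟨⟨i, y⟩ | ⟨i, y⟩, h, -⟩ := hR.existsUnique hv
  · have h' := hR.symm h
    obtain ⟨-, ⟨rfl, rfl | ⟨rfl, -⟩⟩ | ⟨rfl, rfl, -⟩⟩ := stripGraph_adj_odd_even.1 (hR.adj h')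
    · exact Or.inl h'
    · exact Or.inr (Or.inl ⟨y, rfl, h'⟩)
    · exact Or.inr (Or.inr (Or.inl h'))
  · obtain ⟨rfl, rfl, ⟨-, rfl⟩ | ⟨-, rfl⟩⟩ := stripGraph_adj_even_even.1 (hR.adj h)
    · exact Or.inr (Or.inr (Or.inr ⟨rfl, Or.inl h⟩))
    · exact Or.inr (Or.inr (Or.inr ⟨rfl, Or.inr ⟨y, rfl, hR.symm h⟩⟩))

theorem notMem_configFrom_movesOf_succ (hj : j < n) (hv : odd (j + 1) x ∈ vertices n)
    (he : ∀ k < j + 1, ValidMove k (configFrom n (movesOf n R) k) (movesOf n R k))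
    (hO : ∀ x, odd j x ∈ vertices n → (x ∉ configFrom n (movesOf n R) j ↔
      ∃ i, i + 1 = j ∧ R (odd j x) (even i x))) :
    x ∉ configFrom n (movesOf n R) (j + 1) ↔ R (odd (j + 1) x) (even j x) := by
  obtain ⟨-, hx, -⟩ := odd_mem_vertices.1 hv
  rcases hx.lt_or_eq with hx | rfl
  swap
  · rw [mem_configFrom_of_le he le_rfl]
    refine iff_of_false (by omega) fun h => ?_
    have := stripGraph_adj_odd_even.1 (hR.adj h)
    omega
  rw [configFrom, configAt, mem_moveParticles]
  constructor
  · intro h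
    rcases rel_even_cases hR (even_mem_vertices.2 ⟨hj.le, by omega, by omega⟩ :
      even j x ∈ vertices n) with h' | ⟨y, rfl, h'⟩ | h' | ⟨rfl, -⟩
    · refine absurd (Or.inl ⟨?_, fun hm => ?_⟩) h
      · by_contra hx'
        obtain ⟨i, rfl, hi⟩ := (hO x (odd_mem_vertices_of_rel hR h')).1 hx'
        simpa using hR.unique h' hi
      · simpa using hR.unique h' ((mem_movesOf hR).1 hm).2
    · exact absurd (Or.inr ⟨y, (mem_movesOf hR).2 ⟨hj, h'⟩, rfl⟩) h
    · exact h'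
    · exact absurd hj (lt_irrefl _)
  · rintro h (⟨hx', hm⟩ | ⟨y, hy, rfl⟩)
    · have hxj : x ≤ 2 * j := by
        by_contra! hlt
        have := (mem_configFrom_of_le (fun k hk => he k (by omega)) hlt.le).1 hx'
        omega
      have hv' : odd j x ∈ vertices n := odd_mem_vertices.2 ⟨hj.le, hxj, by omega⟩
      rcases rel_odd_cases hR hv' with h' | h' | h'
      · simpa using hR.unique (hR.symm h) (hR.symm h')
      · exact hm ((mem_movesOf hR).2 ⟨hj, h'⟩)
      · exact (hO x hv').2 h' hx'
    · simpa using hR.unique (hR.symm h) (hR.symm ((mem_movesOf hR).1 hy).2)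

theorem validMove_movesOf_of_notMem_iff (hj : j < n)
    (he : ∀ k < j, ValidMove k (configFrom n (movesOf n R) k) (movesOf n R k))
    (hO : ∀ x, odd j x ∈ vertices n → (x ∉ configFrom n (movesOf n R) j ↔
      ∃ i, i + 1 = j ∧ R (odd j x) (even i x))) :
    ValidMove j (configFrom n (movesOf n R) j) (movesOf n R j) where
  subset x hx := by
    have h := ((mem_movesOf hR).1 hx).2
    by_contra hx'
    obtain ⟨i, rfl, hi⟩ := (hO x (odd_mem_vertices_of_rel hR h)).1 hx'
    simpa using hR.unique h hi
  le x hx := by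
    have h := ((mem_movesOf hR).1 hx).2
    exact (odd_mem_vertices.1 (odd_mem_vertices_of_rel hR h)).2.1
  succ_mem x hx hx' := by
    have h := ((mem_movesOf hR).1 hx).2
    have hxj : x + 1 ≤ 2 * j := by
      have := (odd_mem_vertices.1 (odd_mem_vertices_of_rel hR h)).2.1
      by_contra! hlt
      have := (mem_configFrom_of_le he hlt.le).1 hx'
      omega
    have hv : odd j (x + 1) ∈ vertices n := odd_mem_vertices.2 ⟨hj.le, hxj, by omega⟩
    rcases rel_odd_cases hR hv with h' | h' | h'
    · simpa using hR.unique (hR.symm h) (hR.symm h')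
    · exact (mem_movesOf hR).2 ⟨hj, h'⟩
    · exact absurd hx' ((hO (x + 1) hv).2 h')

theorem validMove_movesOf_and_notMem_iff (hj : j ≤ n) :
    (∀ k < j, ValidMove k (configFrom n (movesOf n R) k) (movesOf n R k)) ∧
      ∀ x, odd j x ∈ vertices n → (x ∉ configFrom n (movesOf n R) j ↔
        ∃ i, i + 1 = j ∧ R (odd j x) (even i x)) := by
  induction j with
  | zero =>
    refine ⟨by simp, fun x hv => ?_⟩
    obtain rfl : x = 0 := by simpa using (odd_mem_vertices.1 hv).2.1
    simpa [configFrom, configAt] using (mem_initialConfig (n := n) (x := 0)).2 (by simp)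
  | succ j ih =>
    obtain ⟨he, hO⟩ := ih (by omega)
    have he' : ∀ k < j + 1, ValidMove k (configFrom n (movesOf n R) k) (movesOf n R k) :=
      Nat.forall_lt_succ_right.2 ⟨he, validMove_movesOf_of_notMem_iff hR hj he hO⟩
    refine ⟨he', fun x hv => ?_⟩
    rw [notMem_configFrom_movesOf_succ hR hj hv he' hO]
    simp

theorem validMove_movesOf {k : ℕ} (hk : k < n) :
    ValidMove k (configFrom n (movesOf n R) k) (movesOf n R k) :=
  (validMove_movesOf_and_notMem_iff hR le_rfl).1 k hk

theorem notMem_configFrom_movesOf (hv : odd j x ∈ vertices n) :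
    x ∉ configFrom n (movesOf n R) j ↔ ∃ i, i + 1 = j ∧ R (odd j x) (even i x) :=
  (validMove_movesOf_and_notMem_iff hR (odd_mem_vertices.1 hv).1).2 x hv

theorem mem_configFrom_movesOf (hv : odd j x ∈ vertices n) : x ∈ configFrom n (movesOf n R) j ↔
    R (odd j x) (even j x) ∨ R (odd j x) (even j (x + 1)) := by
  rw [← not_iff_not, notMem_configFrom_movesOf hR hv, not_or]
  constructor
  · rintro ⟨i, rfl, hi⟩
    exact ⟨fun h => by simpa using hR.unique h hi, fun h => by simpa using hR.unique h hi⟩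
  · rintro ⟨h, h'⟩
    exact ((rel_odd_cases hR hv).resolve_left h).resolve_left h'

/-- The vertex `even n x` is matched to a vertex with smaller first coordinate. -/
def MatchedLeft (n : ℕ) (R : StripVertex → StripVertex → Prop) (x : ℕ) : Prop :=
  ∃ y, y + 1 = x ∧ (R (odd n y) (even n (y + 1)) ∨ R (even n y) (even n (y + 1)))

omit hR in
theorem matchedLeft_succ : MatchedLeft n R (x + 1) ↔
    R (odd n x) (even n (x + 1)) ∨ R (even n x) (even n (x + 1)) := by
  simp [MatchedLeft]

theorem not_matchedLeft_of_rel_odd (h : R (odd n x) (even n x)) : ¬MatchedLeft n R x := by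
  rintro ⟨y, rfl, h' | h'⟩ <;> simpa using hR.unique (hR.symm h) (hR.symm h')

theorem not_matchedLeft_of_rel_succ (h : R (even n x) (even n (x + 1))) :
    ¬MatchedLeft n R x := by
  rintro ⟨y, rfl, h' | h'⟩
  · simpa using hR.unique h (hR.symm h')
  · have := hR.unique h (hR.symm h')
    simp only [even.injEq] at this
    omega

theorem rel_odd_or_matchedLeft_or_rel_succ (hx : x ≤ 2 * n) : R (odd n x) (even n x) ∨
    MatchedLeft n R x ∨ R (even n x) (even n (x + 1)) := by
  have hv : even n x ∈ vertices n := even_mem_vertices.2 (by omega)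
  rcases rel_even_cases hR hv with h | ⟨y, rfl, h⟩ | h | ⟨-, h | ⟨y, rfl, h⟩⟩
  · exact Or.inl h
  · exact Or.inr (Or.inl (matchedLeft_succ.2 (Or.inl h)))
  · exact absurd (odd_mem_vertices.1 (odd_mem_vertices_of_rel hR h)).1 (by omega)
  · exact Or.inr (Or.inr h)
  · exact Or.inr (Or.inl (matchedLeft_succ.2 (Or.inr h)))

theorem mem_configFrom_and_matchedLeft_iff (hv : odd n x ∈ vertices n) :
    x ∈ configFrom n (movesOf n R) n ∧ MatchedLeft n R x ↔ R (odd n x) (even n (x + 1)) := by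
  rw [mem_configFrom_movesOf hR hv]
  constructor
  · rintro ⟨h | h, hleft⟩
    · exact absurd hleft (not_matchedLeft_of_rel_odd hR h)
    · exact h
  · intro h
    refine ⟨Or.inr h, ?_⟩
    rcases rel_odd_or_matchedLeft_or_rel_succ hR (odd_mem_vertices.1 hv).2.1 with h' | h' | h'
    · simpa using hR.unique h h'
    · exact h'
    · simpa using hR.unique (hR.symm h) (hR.symm h')

theorem notMem_configFrom_and_not_matchedLeft_iff (hv : odd n x ∈ vertices n) :
    x ∉ configFrom n (movesOf n R) n ∧ ¬MatchedLeft n R x ↔ R (even n x) (even n (x + 1)) := by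
  rw [mem_configFrom_movesOf hR hv, not_or]
  constructor
  · rintro ⟨⟨h, -⟩, h'⟩
    exact ((rel_odd_or_matchedLeft_or_rel_succ hR (odd_mem_vertices.1 hv).2.1).resolve_left
      h).resolve_left h'
  · exact fun h => ⟨⟨fun h' => by simpa using hR.unique h (hR.symm h'),
      fun h' => by simpa using hR.unique (hR.symm h) (hR.symm h')⟩,
      not_matchedLeft_of_rel_succ hR h⟩

theorem oddHoles_configFrom_movesOf (hx : x ≤ 2 * n) :
    OddHoles (configFrom n (movesOf n R) n) x ↔ MatchedLeft n R x := by
  induction x with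
  | zero => simpa [MatchedLeft] using not_oddHoles_zero _
  | succ x ih =>
    have hv : odd n x ∈ vertices n := odd_mem_vertices.2 (by omega)
    rw [matchedLeft_succ, ← mem_configFrom_and_matchedLeft_iff hR hv,
      ← notMem_configFrom_and_not_matchedLeft_iff hR hv]
    by_cases hO : x ∈ configFrom n (movesOf n R) n
    · simp [oddHoles_succ_of_mem hO, ih (by omega), hO]
    · simp [oddHoles_succ_of_notMem hO, ih (by omega), hO]

theorem mem_moveAt_movesOf (hv : odd j x ∈ vertices n) :
    x ∈ moveAt n (movesOf n R) j ↔ R (odd j x) (even j (x + 1)) := by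
  obtain ⟨hj, hx, -⟩ := odd_mem_vertices.1 hv
  rcases hj.lt_or_eq with hlt | rfl
  · rw [moveAt_of_lt hlt, mem_movesOf hR, and_iff_right hlt]
  · rw [moveAt_self, mem_lastMove, oddHoles_configFrom_movesOf hR hx,
      mem_configFrom_and_matchedLeft_iff hR hv]

theorem rel_partner_odd (hv : odd j x ∈ vertices n) :
    R (odd j x) (partner n (movesOf n R) (odd j x)) := by
  by_cases hO : x ∈ configFrom n (movesOf n R) j
  · by_cases hm : x ∈ moveAt n (movesOf n R) j
    · rw [partner_odd_of_mem_moveAt hm hO]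
      exact (mem_moveAt_movesOf hR hv).1 hm
    · rw [partner_odd_of_notMem_moveAt hO hm]
      rw [mem_moveAt_movesOf hR hv] at hm
      exact ((mem_configFrom_movesOf hR hv).1 hO).resolve_right hm
  · rw [partner_odd_of_notMem hO]
    obtain ⟨i, rfl, hi⟩ := (notMem_configFrom_movesOf hR hv).1 hO
    exact hi

theorem partner_eq_of_rel_odd {v : StripVertex} (h : R (odd j x) v) :
    partner n (movesOf n R) v = odd j x := by
  have hv := odd_mem_vertices_of_rel hR h
  rw [hR.unique h (rel_partner_odd hR hv)]
  exact (partner_partner_odd (fun k => validMove_movesOf hR) hv).2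

theorem partner_eq_of_rel_even_succ (h : R (even n x) (even n (x + 1))) :
    partner n (movesOf n R) (even n x) = even n (x + 1) := by
  have hx : x + 1 ≤ 2 * n := by
    have := stripGraph_adj_even_even.1 (hR.adj h)
    omega
  obtain ⟨hO, hleft⟩ :=
    (notMem_configFrom_and_not_matchedLeft_iff hR (odd_mem_vertices.2 (by omega))).2 h
  rw [partner_even_of_notMem, if_neg n.lt_irrefl, if_neg]
  · rwa [oddHoles_configFrom_movesOf hR (by omega)]
  · rw [mem_moveParticles]
    rintro (⟨hx', -⟩ | ⟨y, hy, rfl⟩)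
    · exact hO hx'
    · rw [mem_moveAt_movesOf hR (odd_mem_vertices.2 (by omega))] at hy
      exact hleft (matchedLeft_succ.2 (Or.inl hy))

theorem partner_eq_of_rel {v w : StripVertex} (h : R v w) : partner n (movesOf n R) v = w := by
  rcases v with ⟨j, x⟩ | ⟨j, x⟩
  · exact hR.unique (rel_partner_odd hR (odd_mem_vertices_of_rel hR h)) h
  rcases w with ⟨i, y⟩ | ⟨i, y⟩
  · exact partner_eq_of_rel_odd hR (hR.symm h)
  obtain ⟨rfl, rfl, ⟨-, rfl⟩ | ⟨-, rfl⟩⟩ := stripGraph_adj_even_even.1 (hR.adj h)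
  · exact partner_eq_of_rel_even_succ hR h
  · rw [← partner_eq_of_rel_even_succ hR (hR.symm h)]
    exact (partner_partner_even (fun k => validMove_movesOf hR)
      (mem_Vset_of_adj (hR.adj (hR.symm h)))).2

theorem rel_iff_partner_eq {v w : StripVertex} :
    v ∈ vertices n ∧ partner n (movesOf n R) v = w ↔ R v w := by
  refine ⟨?_, fun h => ⟨mem_Vset_of_adj (hR.adj h), partner_eq_of_rel hR h⟩⟩
  rintro ⟨hv, rfl⟩
  obtain ⟨w, h, -⟩ := hR.existsUnique hv
  rwa [partner_eq_of_rel hR h]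

end MatchingToHistory

section Bijection

open StripVertex

variable {n : ℕ} {e : ℕ → Finset ℕ}

theorem movesOf_partner (he : e ∈ histories n 0 (initialConfig n)) :
    movesOf n (fun v w => v ∈ vertices n ∧ partner n e v = w) = e := by
  have he' : ∀ k < n, ValidMove k (configFrom n e k) (e k) := by simpa only [zero_add] using he.1
  ext j x
  rw [mem_movesOf (isMatchingRel_partner he'), odd_mem_vertices]
  rcases lt_or_ge j n with hj | hj
  · rw [← moveAt_of_lt (e := e) hj]
    have hvalid := validMove_moveAt he' hj.le
    refine ⟨fun ⟨_, _, h⟩ => ?_, fun h => ⟨hj, ?_, partner_odd_of_mem_moveAt h (hvalid.subset h)⟩⟩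
    · by_contra hm
      by_cases hO : x ∈ configFrom n e j
      · simp [partner_odd_of_notMem_moveAt hO hm] at h
      · simp [partner_odd_of_notMem hO] at h
    · have := hvalid.le x h
      omega
  · simp [he.2 j hj, hj.not_gt]

/-- Perfect matchings of `G_n` correspond to histories of the particle system. -/
noncomputable def matchingRelEquivHistories (n : ℕ) :
    {R // IsMatchingRel (stripGraph n) (vertices n) R} ≃ histories n 0 (initialConfig n) where
  toFun R := ⟨movesOf n R, fun k hk => by rw [zero_add]; exact validMove_movesOf R.2 hk,
    fun k hk => by ext x; simp [mem_movesOf R.2, hk.not_gt]⟩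
  invFun e := ⟨fun v w => v ∈ vertices n ∧ partner n e v = w,
    isMatchingRel_partner (by simpa only [zero_add] using e.2.1)⟩
  left_inv R := by
    ext v w
    exact rel_iff_partner_eq R.2
  right_inv e := Subtype.ext (movesOf_partner e.2)

theorem Zpm_empty (n : ℕ) : Zpm n ∅ = Nat.card (histories n 0 (initialConfig n)) := by
  rw [Zpm, Set.sdiff_empty]
  exact Nat.card_congr ((perfectMatchingEquiv mem_Vset_of_adj (toLattice n)
    (Vset_subset_range_toLattice n)).trans (matchingRelEquivHistories n))

end Bijection

/-- For every `n ≥ 0`, the number of perfect matchings of `G_n` equals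
`A_{n+1} = Π_{i=0}^{n} (3i+1)!/((n+1)+i)!`, the number of `(n+1)×(n+1)` alternating
sign matrices. -/
theorem Zpm_eq_ASM (n : ℕ) :
    (Zpm n ∅ : ℚ) =
      ∏ i ∈ Finset.range (n+1),
        (Nat.factorial (3*i+1) : ℚ) / (Nat.factorial ((n+1)+i) : ℚ) := by
  rw [Zpm_empty, card_histories_initialConfig, asmProd]
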